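/- arXiv:1102.2764 — 5 statements merged into one kernel-verified Lean document; each statement's English description precedes it below -/
import Mathlib

section
/- For every y in the interior P° of P, the determinant of the Hessian of u⁰ satisfies det(D²u⁰(y)) = Σ_{1 ≤ i₁ < ⋯ < iₙ ≤ d} det(n⁽ⁱ¹⁾,…,n⁽ⁱⁿ⁾)² / (l_{i₁}(y) ⋯ l_{iₙ}(y)), where det(n⁽ⁱ¹⁾,…,n⁽ⁱⁿ⁾) denotes the determinant of the n×n matrix with columns n⁽ⁱ¹⁾,…,n⁽ⁱⁿ⁾. -/
noncomputable section

/-- Dot product on `Fin n → ℝ`. -/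
def dotp {n : ℕ} (x y : Fin n → ℝ) : ℝ := ∑ j, x j * y j

/-- The affine functions `lᵢ(y) = ⟨y, n⁽ⁱ⁾⟩ + 1`. -/
def lfun {n d : ℕ} (N : Fin d → Fin n → ℤ) (i : Fin d) (y : Fin n → ℝ) : ℝ :=
  (∑ j, y j * (N i j : ℝ)) + 1

/-- The dual polytope `P = {y : ⟨y, n⁽ⁱ⁾⟩ ≥ -1 for all i}`. -/
def Pset {n d : ℕ} (N : Fin d → Fin n → ℤ) : Set (Fin n → ℝ) :=
  {y | ∀ i, (∑ j, y j * (N i j : ℝ)) ≥ -1}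

/-- The function `u⁰(y) = ∑ᵢ lᵢ(y) log lᵢ(y)`. -/
def u0 {n d : ℕ} (N : Fin d → Fin n → ℤ) (y : Fin n → ℝ) : ℝ :=
  ∑ i, lfun N i y * Real.log (lfun N i y)

/-- Second partial derivatives (Hessian matrix) of a function on `Fin n → ℝ`. -/
def hess {n : ℕ} (f : (Fin n → ℝ) → ℝ) (x : Fin n → ℝ) : Matrix (Fin n) (Fin n) ℝ :=
  Matrix.of fun p q => fderiv ℝ (fun z => fderiv ℝ f z (Pi.single q 1)) x (Pi.single p 1)

def Lmap {n d : ℕ} (N : Fin d → Fin n → ℤ) (i : Fin d) : (Fin n → ℝ) →L[ℝ] ℝ :=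
  ∑ j, (N i j : ℝ) • ContinuousLinearMap.proj (R := ℝ) (φ := fun _ : Fin n => ℝ) j

theorem Lmap_apply {n d : ℕ} (N : Fin d → Fin n → ℤ) (i : Fin d) (y : Fin n → ℝ) :
    Lmap N i y = ∑ j, y j * (N i j : ℝ) := by
  simp [Lmap, mul_comm]

theorem Lmap_single {n d : ℕ} (N : Fin d → Fin n → ℤ) (i : Fin d) (q : Fin n) :
    Lmap N i (Pi.single q 1) = (N i q : ℝ) := by
  rw [Lmap_apply, Finset.sum_eq_single q]
  · simp
  · intro b _ hb
    simp [Pi.single_eq_of_ne hb]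
  · simp

theorem lfun_hasFDerivAt {n d : ℕ} (N : Fin d → Fin n → ℤ) (i : Fin d) (y : Fin n → ℝ) :
    HasFDerivAt (lfun N i) (Lmap N i) y := by
  have h : lfun N i = fun y => Lmap N i y + 1 := by
    funext z
    rw [Lmap_apply, lfun]
  rw [h]
  exact (Lmap N i).hasFDerivAt.add_const 1

theorem lfun_pos {n d : ℕ} (N : Fin d → Fin n → ℤ) (y : Fin n → ℝ)
    (hy : y ∈ interior (Pset N)) (i : Fin d) : 0 < lfun N i y := by
  have hP : ∀ z ∈ Pset N, 0 ≤ lfun N i z := by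
    intro z hz
    have := hz i
    unfold lfun
    linarith
  rcases (hP y (interior_subset hy)).lt_or_eq with h | h
  · exact h
  exfalso
  have hmin : IsLocalMin (lfun N i) y := by
    filter_upwards [mem_interior_iff_mem_nhds.1 hy] with z hz
    rw [← h]
    exact hP z hz
  have h0 := hmin.hasFDerivAt_eq_zero (lfun_hasFDerivAt N i y)
  have h1 : lfun N i y = Lmap N i y + 1 := by rw [Lmap_apply, lfun]
  rw [h0] at h1
  simp at h1
  linarith

theorem hess_u0 {n d : ℕ} (N : Fin d → Fin n → ℤ) (y : Fin n → ℝ)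
    (hy : y ∈ interior (Pset N)) (p q : Fin n) :
    hess (u0 N) y p q = ∑ i, ((lfun N i y)⁻¹ * (N i p : ℝ)) * (N i q : ℝ) := by
  have h1 : ∀ z ∈ interior (Pset N), fderiv ℝ (u0 N) z (Pi.single q 1) =
      ∑ i, (Real.log (lfun N i z) + 1) * (N i q : ℝ) := by
    intro z hz
    have : HasFDerivAt (u0 N) (∑ i, (Real.log (lfun N i z) + 1) • Lmap N i) z := by
      unfold u0
      apply HasFDerivAt.fun_sum
      intro i _
      exact (Real.hasDerivAt_mul_log (lfun_pos N z hz i).ne').comp_hasFDerivAt z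
        (lfun_hasFDerivAt N i z)
    rw [this.fderiv]
    simp [_root_.sum_apply, Lmap_single]
  have h2 : (fun z => fderiv ℝ (u0 N) z (Pi.single q 1)) =ᶠ[nhds y]
      fun z => ∑ i, (Real.log (lfun N i z) + 1) * (N i q : ℝ) := by
    filter_upwards [isOpen_interior.mem_nhds hy] with z hz using h1 z hz
  have h3 : HasFDerivAt (fun z => ∑ i, (Real.log (lfun N i z) + 1) * (N i q : ℝ))
      (∑ i, (N i q : ℝ) • ((lfun N i y)⁻¹ • Lmap N i)) y := by
    apply HasFDerivAt.fun_sum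
    intro i _
    exact (((lfun_hasFDerivAt N i y).log (lfun_pos N y hy i).ne').add_const 1).mul_const _
  simp only [hess, Matrix.of_apply]
  rw [h2.fderiv_eq, h3.fderiv]
  simp only [_root_.sum_apply, ContinuousLinearMap.smul_apply, Lmap_single,
    smul_eq_mul]
  exact Finset.sum_congr rfl fun i _ => by ring

theorem cauchy_binet_aux {n d : ℕ} (A : Fin d → Fin n → ℝ) (c : Fin d → ℝ) :
    (Matrix.of fun p q => ∑ i, (c i * A i p) * A i q : Matrix (Fin n) (Fin n) ℝ).det =
      ∑ σ ∈ Finset.univ.filter (fun σ : Fin n → Fin d => ∀ i j : Fin n, i < j → σ i < σ j),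
        (Matrix.det (Matrix.of fun p k => A (σ k) p)) ^ 2 * ∏ k, c (σ k) := by
  classical
  have e1 : (Matrix.of fun p q => ∑ i, (c i * A i p) * A i q : Matrix (Fin n) (Fin n) ℝ).det =
      ∑ f : Fin n → Fin d, (∏ p, c (f p) * A (f p) p) *
        (Matrix.of fun p q => A (f p) q : Matrix (Fin n) (Fin n) ℝ).det := by
    have h := (Matrix.detRowAlternating (R := ℝ) (n := Fin n)).toMultilinearMap.map_sum
      (fun (p : Fin n) (i : Fin d) => (c i * A i p) • A i)
    have h' : (fun p => ∑ i, (c i * A i p) • A i) =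
        (fun p q => ∑ i, (c i * A i p) * A i q : Fin n → Fin n → ℝ) := by
      funext p q
      simp [Finset.sum_apply]
    rw [h'] at h
    refine h.trans (Finset.sum_congr rfl fun f _ => ?_)
    exact (Matrix.detRowAlternating (R := ℝ) (n := Fin n)).toMultilinearMap.map_smul_univ
      (fun p => c (f p) * A (f p) p) (fun p => A (f p))
  have e2 : ∀ σ : Fin n → Fin d,
      (Matrix.det (Matrix.of fun p k => A (σ k) p)) ^ 2 * ∏ k, c (σ k) =
      ∑ τ : Equiv.Perm (Fin n), (∏ p, c (σ (τ p)) * A (σ (τ p)) p) *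
        (Matrix.of fun p q => A (σ (τ p)) q : Matrix (Fin n) (Fin n) ℝ).det := by
    intro σ
    have t : (Matrix.of fun p k => A (σ k) p : Matrix (Fin n) (Fin n) ℝ).det =
        (Matrix.of fun k p => A (σ k) p : Matrix (Fin n) (Fin n) ℝ).det :=
      Matrix.det_transpose (Matrix.of fun k p => A (σ k) p)
    rw [t, sq, mul_assoc]
    conv_lhs =>
      lhs
      rw [Matrix.det_apply']
    rw [Finset.sum_mul]
    refine Finset.sum_congr rfl fun τ _ => ?_
    have hp := Matrix.det_permute τ (Matrix.of fun k p => A (σ k) p)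
    have hc : ∏ p, c (σ (τ p)) = ∏ k, c (σ k) := Equiv.prod_comp τ (fun k => c (σ k))
    rw [Finset.prod_mul_distrib, hc]
    have hp' : (Matrix.of fun p q => A (σ (τ p)) q : Matrix (Fin n) (Fin n) ℝ).det =
      (Equiv.Perm.sign τ : ℤ) * (Matrix.of fun k p => A (σ k) p : Matrix (Fin n) (Fin n) ℝ).det := hp
    rw [hp']
    simp only [Matrix.of_apply]
    ring
  rw [e1, Finset.sum_congr rfl fun σ _ => e2 σ, ← Finset.sum_product']
  symm
  rw [← Finset.sum_filter_of_ne (p := Function.Injective) (s := Finset.univ)]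
  · refine Finset.sum_bij (fun x _ => x.1 ∘ x.2) ?_ ?_ ?_ ?_
    · rintro ⟨σ, τ⟩ h
      simp only [Finset.mem_product, Finset.mem_filter, Finset.mem_univ, true_and, and_true] at h ⊢
      have hs : StrictMono σ := fun i j hij => h i j hij
      exact hs.injective.comp τ.injective
    · rintro ⟨σ, τ⟩ h ⟨σ', τ'⟩ h' e
      simp only [Finset.mem_product, Finset.mem_filter, Finset.mem_univ, true_and, and_true] at h h' e
      have hs : StrictMono σ := fun i j hij => h i j hij
      have hs' : StrictMono σ' := fun i j hij => h' i j hij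
      have hr : Set.range σ = Set.range σ' := by
        rw [← τ.surjective.range_comp σ, ← τ'.surjective.range_comp σ', e]
      have : σ = σ' := (hs.range_inj hs').1 hr
      subst this
      congr 1
      ext1 p
      exact hs.injective (congrFun e p)
    · intro f hf
      simp only [Finset.mem_filter, Finset.mem_univ, true_and] at hf
      refine ⟨(f ∘ Tuple.sort f, (Tuple.sort f)⁻¹), ?_, ?_⟩
      · simp only [Finset.mem_product, Finset.mem_filter, Finset.mem_univ, true_and, and_true]
        intro i j hij
        exact (Tuple.monotone_sort f).strictMono_of_injective
          (hf.comp (Tuple.sort f).injective) hij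
      · funext p
        simp
    · rintro ⟨σ, τ⟩ h
      rfl
  · intro f _ hne
    by_contra hinj
    apply hne
    simp only [Function.Injective, not_forall] at hinj
    obtain ⟨a, b, hab, hne'⟩ := hinj
    rw [Matrix.det_zero_of_row_eq hne' (by funext q; simp [hab]), mul_zero]

/-- `det D²u⁰ = ∑_{i₁<⋯<iₙ} det(n⁽ⁱ¹⁾,…,n⁽ⁱⁿ⁾)² / (l_{i₁} ⋯ l_{iₙ})`, the sum running
over strictly increasing `n`-tuples, i.e. over strictly monotone maps `σ : Fin n → Fin d`. -/
theorem det_hessian_of_u0 {n d : ℕ} (hn : 1 ≤ n) (N : Fin d → Fin n → ℤ)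
    (hQ : (0 : Fin n → ℝ) ∈ interior (convexHull ℝ (Set.range fun i => fun j => (N i j : ℝ)))) :
    ∀ y ∈ interior (Pset N),
      (hess (u0 N) y).det =
        ∑ σ ∈ Finset.univ.filter (fun σ : Fin n → Fin d => ∀ i j : Fin n, i < j → σ i < σ j),
          (Matrix.det (Matrix.of fun p k => (N (σ k) p : ℝ))) ^ 2 / ∏ k, lfun N (σ k) y := by
  intro y hy
  have hH : hess (u0 N) y =
      Matrix.of fun p q => ∑ i, ((lfun N i y)⁻¹ * (N i p : ℝ)) * (N i q : ℝ) := by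
    ext p q
    exact hess_u0 N y hy p q
  rw [hH, cauchy_binet_aux (fun i j => (N i j : ℝ)) (fun i => (lfun N i y)⁻¹)]
  refine Finset.sum_congr rfl fun σ _ => ?_
  rw [Finset.prod_inv_distrib, div_eq_mul_inv]
end
end

section
/- The gradient map Du⁰ : P° → ℝⁿ, y ↦ (∂u⁰/∂y₁(y),…,∂u⁰/∂yₙ(y)), is a bijection from the interior P° of P onto all of ℝⁿ (indeed a diffeomorphism). -/
noncomputable section

/-- The gradient of a function on `Fin n → ℝ`. -/
def grad {n : ℕ} (f : (Fin n → ℝ) → ℝ) (x : Fin n → ℝ) : Fin n → ℝ :=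
  fun p => fderiv ℝ f x (Pi.single p 1)

/-- Linear part of `lfun`. -/
def Lf {n d : ℕ} (N : Fin d → Fin n → ℤ) (i : Fin d) : (Fin n → ℝ) →L[ℝ] ℝ :=
  ∑ j, (N i j : ℝ) • ContinuousLinearMap.proj (R := ℝ) (φ := fun _ : Fin n => ℝ) j

lemma Lf_apply {n d : ℕ} (N : Fin d → Fin n → ℤ) (i : Fin d) (y : Fin n → ℝ) :
    Lf N i y = ∑ j, y j * (N i j : ℝ) := by
  simp [Lf, mul_comm]

lemma lfun_eq {n d : ℕ} (N : Fin d → Fin n → ℤ) (i : Fin d) (y : Fin n → ℝ) :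
    lfun N i y = Lf N i y + 1 := by
  rw [Lf_apply]; rfl

lemma mem_Pset {n d : ℕ} (N : Fin d → Fin n → ℤ) (y : Fin n → ℝ) :
    y ∈ Pset N ↔ ∀ i, 0 ≤ lfun N i y := by
  simp only [lfun_eq, Lf_apply, Pset, Set.mem_ofPred_eq]
  refine forall_congr' fun i => ?_
  constructor <;> intro h <;> linarith

lemma continuous_lfun {n d : ℕ} (N : Fin d → Fin n → ℤ) (i : Fin d) :
    Continuous (lfun N i) := by
  have : lfun N i = fun y => Lf N i y + 1 := funext (lfun_eq N i)
  rw [this]; fun_prop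

lemma interior_Pset {n d : ℕ} (N : Fin d → Fin n → ℤ) :
    interior (Pset N) = {y | ∀ i, 0 < lfun N i y} := by
  apply Set.Subset.antisymm
  · intro y hy i
    have hc : Filter.Tendsto (fun t : ℝ => (1 + t) • y) (nhdsWithin 0 (Set.Ioi 0)) (nhds y) := by
      have : Continuous (fun t : ℝ => (1 + t) • y) := by fun_prop
      have h := this.tendsto 0
      simp only [add_zero, one_smul] at h
      exact h.mono_left nhdsWithin_le_nhds
    have h1 := hc.eventually (mem_interior_iff_mem_nhds.1 hy)
    obtain ⟨t, ht, ht0⟩ := (h1.and self_mem_nhdsWithin).exists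
    have ht0 : 0 < t := ht0
    have h2 := (mem_Pset N _).1 ht i
    rw [lfun_eq, map_smul, smul_eq_mul] at h2
    rw [lfun_eq]
    by_contra hcon
    push Not at hcon
    nlinarith
  · apply interior_maximal
    · intro y hy
      exact (mem_Pset N y).2 fun i => (hy i).le
    · simp only [Set.ofPred_forall]
      exact isOpen_iInter_of_finite fun i => isOpen_lt continuous_const (continuous_lfun N i)

lemma key_bound {n d : ℕ} (N : Fin d → Fin n → ℤ)
    (hQ : (0 : Fin n → ℝ) ∈ interior (convexHull ℝ (Set.range fun i => fun j => (N i j : ℝ)))) :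
    ∃ ε : ℝ, 0 < ε ∧ ∀ (w : Fin n → ℝ) (c : ℝ), (∀ i, -c ≤ Lf N i w) → ∀ j, |w j| * ε ≤ c := by
  obtain ⟨r, hr, hball⟩ := Metric.mem_nhds_iff.1 (mem_interior_iff_mem_nhds.1 hQ)
  refine ⟨r / 2, by positivity, fun w c hw j => ?_⟩
  have hsub : convexHull ℝ (Set.range fun i => fun j => (N i j : ℝ)) ⊆
      {v | -c ≤ ∑ j, w j * v j} := by
    apply convexHull_min
    · rintro _ ⟨i, rfl⟩
      have := hw i
      rw [Lf_apply] at this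
      exact this
    · apply convex_halfSpace_ge
      constructor
      · intro x y; simp [mul_add, Finset.sum_add_distrib]
      · intro a x; simp only [Pi.smul_apply, smul_eq_mul, Finset.mul_sum]
        exact Finset.sum_congr rfl fun _ _ => by ring
  have key : ∀ s : ℝ, |s| < r → -c ≤ w j * s := by
    intro s hs
    have hm : (Pi.single j s : Fin n → ℝ) ∈ Metric.ball (0 : Fin n → ℝ) r := by
      rw [mem_ball_zero_iff, Pi.norm_single]
      exact hs
    have := hsub (hball hm)
    simpa [Pi.single_apply] using this
  have hr2 : |r / 2| < r := by rw [abs_of_pos (by positivity)]; linarith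
  have h1 := key (r / 2) hr2
  have h2 := key (-(r / 2)) (by rwa [abs_neg])
  rcases abs_cases (w j) with ⟨h, _⟩ | ⟨h, _⟩ <;> rw [h] <;> linarith

lemma eq_zero_of_Lf {n d : ℕ} (N : Fin d → Fin n → ℤ)
    (hQ : (0 : Fin n → ℝ) ∈ interior (convexHull ℝ (Set.range fun i => fun j => (N i j : ℝ))))
    (w : Fin n → ℝ) (hw : ∀ i, Lf N i w = 0) : w = 0 := by
  obtain ⟨ε, hε, h⟩ := key_bound N hQ
  ext j
  have h1 := h w 0 (fun i => by simp [hw i]) j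
  have h2 : |w j| ≤ 0 := by
    by_contra hc
    push Not at hc
    nlinarith [mul_pos hc hε]
  simpa using h2

lemma isCompact_Pset {n d : ℕ} (N : Fin d → Fin n → ℤ)
    (hQ : (0 : Fin n → ℝ) ∈ interior (convexHull ℝ (Set.range fun i => fun j => (N i j : ℝ)))) :
    IsCompact (Pset N) := by
  obtain ⟨ε, hε, h⟩ := key_bound N hQ
  apply Metric.isCompact_of_isClosed_isBounded
  · have : Pset N = {y | ∀ i, 0 ≤ lfun N i y} := Set.ext (mem_Pset N)
    rw [this]
    simp only [Set.ofPred_forall]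
    exact isClosed_iInter fun i => isClosed_le continuous_const (continuous_lfun N i)
  · refine (Metric.isBounded_closedBall (x := (0 : Fin n → ℝ)) (r := 1 / ε)).subset ?_
    intro y hy
    rw [mem_closedBall_zero_iff, pi_norm_le_iff_of_nonneg (by positivity)]
    intro j
    rw [le_div_iff₀ hε]
    refine h y 1 (fun i => ?_) j
    have := (mem_Pset N y).1 hy i
    rw [lfun_eq] at this
    linarith

/-- Explicit gradient. -/
def Gm {n d : ℕ} (N : Fin d → Fin n → ℤ) (y : Fin n → ℝ) : Fin n → ℝ :=
  ∑ i, (Real.log (lfun N i y) + 1) • (fun j => (N i j : ℝ))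

lemma hasFDerivAt_lfun {n d : ℕ} (N : Fin d → Fin n → ℤ) (i : Fin d) (y : Fin n → ℝ) :
    HasFDerivAt (lfun N i) (Lf N i) y := by
  have : lfun N i = fun y => Lf N i y + 1 := funext (lfun_eq N i)
  rw [this]
  exact (Lf N i).hasFDerivAt.add_const 1

lemma hasFDerivAt_u0 {n d : ℕ} (N : Fin d → Fin n → ℤ) (y : Fin n → ℝ)
    (hy : ∀ i, 0 < lfun N i y) :
    HasFDerivAt (u0 N) (∑ i, (Real.log (lfun N i y) + 1) • Lf N i) y := by
  unfold u0
  refine HasFDerivAt.fun_sum fun i _ => ?_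
  exact (Real.hasDerivAt_mul_log (hy i).ne').comp_hasFDerivAt y (hasFDerivAt_lfun N i y)

lemma grad_u0 {n d : ℕ} (N : Fin d → Fin n → ℤ) (y : Fin n → ℝ)
    (hy : ∀ i, 0 < lfun N i y) : grad (u0 N) y = Gm N y := by
  ext p
  simp only [grad, (hasFDerivAt_u0 N y hy).fderiv, Gm]
  simp [Lf_apply, Finset.sum_apply, Pi.single_apply]

lemma Gm_pair {n d : ℕ} (N : Fin d → Fin n → ℤ) (c : Fin d → ℝ) (w : Fin n → ℝ) :
    ∑ p, w p * (∑ i, c i • (fun j => (N i j : ℝ)) : Fin n → ℝ) p = ∑ i, c i * Lf N i w := by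
  simp only [Finset.sum_apply, Pi.smul_apply, smul_eq_mul, Lf_apply, Finset.mul_sum]
  rw [Finset.sum_comm]
  exact Finset.sum_congr rfl fun _ _ => Finset.sum_congr rfl fun _ _ => by ring

lemma log_mono_aux {a b : ℝ} (ha : 0 < a) (hb : 0 < b) :
    0 ≤ (Real.log a - Real.log b) * (a - b) ∧
      ((Real.log a - Real.log b) * (a - b) = 0 → a = b) := by
  rcases lt_trichotomy a b with h | h | h
  · have := Real.log_lt_log ha h
    have h2 := mul_pos (sub_pos.2 this) (sub_pos.2 h)
    exact ⟨by nlinarith, fun h3 => by nlinarith⟩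
  · subst h; simp
  · have := Real.log_lt_log hb h
    have h2 := mul_pos (sub_pos.2 this) (sub_pos.2 h)
    exact ⟨by nlinarith, fun h3 => by nlinarith⟩

lemma Gm_inj {n d : ℕ} (N : Fin d → Fin n → ℤ)
    (hQ : (0 : Fin n → ℝ) ∈ interior (convexHull ℝ (Set.range fun i => fun j => (N i j : ℝ))))
    (y z : Fin n → ℝ) (hy : ∀ i, 0 < lfun N i y) (hz : ∀ i, 0 < lfun N i z)
    (h : Gm N y = Gm N z) : y = z := by
  have h1 := Gm_pair N (fun i => Real.log (lfun N i y) + 1) (y - z)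
  have h2 := Gm_pair N (fun i => Real.log (lfun N i z) + 1) (y - z)
  have h3 : ∑ i, (Real.log (lfun N i y) - Real.log (lfun N i z)) * (lfun N i y - lfun N i z) = 0 := by
    have h4 : ∑ i, (Real.log (lfun N i y) + 1) * Lf N i (y - z) =
        ∑ i, (Real.log (lfun N i z) + 1) * Lf N i (y - z) := by
      rw [← h1, ← h2]
      exact Finset.sum_congr rfl fun p _ => congrArg (fun v : Fin n → ℝ => (y - z) p * v p) h
    rw [← sub_eq_zero, ← Finset.sum_sub_distrib] at h4
    rw [← h4]
    refine Finset.sum_congr rfl fun i _ => ?_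
    have : lfun N i y - lfun N i z = Lf N i (y - z) := by
      rw [lfun_eq, lfun_eq, map_sub]; ring
    rw [this]; ring
  rw [Finset.sum_eq_zero_iff_of_nonneg (fun i _ => (log_mono_aux (hy i) (hz i)).1)] at h3
  rw [← sub_eq_zero]
  refine eq_zero_of_Lf N hQ _ fun i => ?_
  have := (log_mono_aux (hy i) (hz i)).2 (h3 i (Finset.mem_univ i))
  rw [lfun_eq, lfun_eq] at this
  rw [map_sub]; linarith

lemma continuous_u0 {n d : ℕ} (N : Fin d → Fin n → ℤ) : Continuous (u0 N) := by
  unfold u0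
  exact continuous_finsetSum _ fun i _ => Real.continuous_mul_log.comp (continuous_lfun N i)

lemma Gm_surj {n d : ℕ} (N : Fin d → Fin n → ℤ)
    (hQ : (0 : Fin n → ℝ) ∈ interior (convexHull ℝ (Set.range fun i => fun j => (N i j : ℝ))))
    (x : Fin n → ℝ) : ∃ y, (∀ i, 0 < lfun N i y) ∧ grad (u0 N) y = x := by
  let X : (Fin n → ℝ) →L[ℝ] ℝ :=
    ∑ j, x j • ContinuousLinearMap.proj (R := ℝ) (φ := fun _ : Fin n => ℝ) j
  have hX : ∀ p, X (Pi.single p 1) = x p := by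
    intro p; simp [X, Pi.single_apply]
  have h0 : (0 : Fin n → ℝ) ∈ Pset N := by
    rw [mem_Pset]; intro i; rw [lfun_eq]; simp
  obtain ⟨y, hyP, hmin⟩ := (isCompact_Pset N hQ).exists_isMinOn ⟨0, h0⟩
    (f := fun y => u0 N y - X y) ((continuous_u0 N).sub X.continuous).continuousOn
  have hnn := (mem_Pset N y).1 hyP
  have hpos : ∀ i, 0 < lfun N i y := by
    intro i0
    by_contra hcon
    have hi0 : lfun N i0 y = 0 := le_antisymm (not_lt.1 hcon) (hnn i0)
    set C : ℝ := X y - u0 N y with hC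
    set t : ℝ := Real.exp (-(|C| + 1)) with ht
    have ht0 : 0 < t := Real.exp_pos _
    have ht1 : t ≤ 1 := by
      rw [ht, Real.exp_le_one_iff]; linarith [abs_nonneg C]
    have hlt : ∀ i, lfun N i ((1 - t) • y) = (1 - t) * lfun N i y + t * 1 := by
      intro i; rw [lfun_eq, lfun_eq, map_smul, smul_eq_mul]; ring
    have hmem : (1 - t) • y ∈ Pset N := by
      rw [mem_Pset]; intro i; rw [hlt]
      have := mul_nonneg (sub_nonneg.2 ht1) (hnn i)
      linarith
    have hle : u0 N y - X y ≤ u0 N ((1 - t) • y) - X ((1 - t) • y) := hmin hmem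
    have hconv : ∀ i, lfun N i ((1 - t) • y) * Real.log (lfun N i ((1 - t) • y)) ≤
        (1 - t) * (lfun N i y * Real.log (lfun N i y)) + (if i = i0 then t * Real.log t else 0) := by
      intro i
      rw [hlt]
      split_ifs with hi
      · subst hi; simp [hi0]
      · have := Real.convexOn_mul_log.2 (x := lfun N i y) (hnn i) (y := 1)
          (by simp) (sub_nonneg.2 ht1) ht0.le (by ring)
        simpa using this
    have hsum : u0 N ((1 - t) • y) ≤ (1 - t) * u0 N y + t * Real.log t := by
      refine (Finset.sum_le_sum fun i _ => hconv i).trans_eq ?_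
      rw [Finset.sum_add_distrib, ← Finset.mul_sum]
      simp [u0]
    rw [map_smul, smul_eq_mul] at hle
    have hfin : 0 ≤ t * (C + Real.log t) := by rw [hC]; linarith
    have hlog : Real.log t = -(|C| + 1) := Real.log_exp _
    have hneg : C + Real.log t < 0 := by rw [hlog]; linarith [le_abs_self C]
    linarith [mul_neg_of_pos_of_neg ht0 hneg]
  refine ⟨y, hpos, ?_⟩
  have hint : y ∈ interior (Pset N) := by rw [interior_Pset]; exact hpos
  have hloc : IsLocalMin (fun y => u0 N y - X y) y :=
    hmin.isLocalMin (mem_interior_iff_mem_nhds.1 hint)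
  have hd := (hasFDerivAt_u0 N y hpos)
  have hz := hloc.hasFDerivAt_eq_zero (hd.sub X.hasFDerivAt)
  ext p
  rw [grad, hd.fderiv, sub_eq_zero.1 hz, hX]

lemma contDiffAt_Gm {n d : ℕ} (N : Fin d → Fin n → ℤ) (y : Fin n → ℝ)
    (hy : ∀ i, 0 < lfun N i y) : ContDiffAt ℝ (⊤ : ℕ∞) (Gm N) y := by
  unfold Gm
  refine ContDiffAt.sum fun i _ => ?_
  have hl : ContDiffAt ℝ (⊤ : ℕ∞) (lfun N i) y := by
    have : lfun N i = fun y => Lf N i y + 1 := funext (lfun_eq N i)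
    rw [this]; fun_prop
  exact ((hl.log (hy i).ne').add contDiffAt_const).smul contDiffAt_const

lemma hasFDerivAt_Gm {n d : ℕ} (N : Fin d → Fin n → ℤ) (y : Fin n → ℝ)
    (hy : ∀ i, 0 < lfun N i y) :
    HasFDerivAt (Gm N)
      (∑ i, ((lfun N i y)⁻¹ • Lf N i).smulRight (fun j => (N i j : ℝ))) y := by
  unfold Gm
  refine HasFDerivAt.fun_sum fun i _ => ?_
  exact (((hasFDerivAt_lfun N i y).log (hy i).ne').add_const 1).smul_const _

lemma exists_equiv {n d : ℕ} (N : Fin d → Fin n → ℤ)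
    (hQ : (0 : Fin n → ℝ) ∈ interior (convexHull ℝ (Set.range fun i => fun j => (N i j : ℝ))))
    (y : Fin n → ℝ) (hy : ∀ i, 0 < lfun N i y) :
    ∃ e : (Fin n → ℝ) ≃L[ℝ] (Fin n → ℝ),
      HasFDerivAt (Gm N) (e : (Fin n → ℝ) →L[ℝ] (Fin n → ℝ)) y := by
  set D : (Fin n → ℝ) →L[ℝ] (Fin n → ℝ) :=
    ∑ i, ((lfun N i y)⁻¹ • Lf N i).smulRight (fun j => (N i j : ℝ)) with hD
  have hDa : ∀ w, D w = ∑ i, ((lfun N i y)⁻¹ * Lf N i w) • (fun j => (N i j : ℝ)) := by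
    intro w
    simp [hD]
  have hinj : Function.Injective (D : (Fin n → ℝ) →ₗ[ℝ] (Fin n → ℝ)) := by
    rw [injective_iff_map_eq_zero]
    intro w hw
    have hw' : D w = 0 := hw
    have h1 := Gm_pair N (fun i => (lfun N i y)⁻¹ * Lf N i w) w
    rw [← hDa, hw'] at h1
    simp only [Pi.zero_apply, mul_zero, Finset.sum_const_zero] at h1
    have h2 : ∀ i ∈ Finset.univ, 0 ≤ (lfun N i y)⁻¹ * Lf N i w * Lf N i w := by
      intro i _
      rw [mul_assoc]
      exact mul_nonneg (inv_nonneg.2 (hy i).le) (mul_self_nonneg _)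
    have h3 := (Finset.sum_eq_zero_iff_of_nonneg h2).1 h1.symm
    refine eq_zero_of_Lf N hQ w fun i => ?_
    have := h3 i (Finset.mem_univ i)
    have hne := (hy i).ne'
    simpa [hne] using this
  refine ⟨(LinearEquiv.ofInjectiveEndo _ hinj).toContinuousLinearEquiv, ?_⟩
  convert hasFDerivAt_Gm N y hy using 1
  rw [← hD]
  ext1 w
  rfl

/-- The gradient map `Du⁰ : P° → ℝⁿ` is a bijection onto all of `ℝⁿ`, indeed a
diffeomorphism: it is smooth on `P°` and has a smooth global inverse. -/
theorem gradient_u0_bijective {n d : ℕ} (hn : 1 ≤ n) (N : Fin d → Fin n → ℤ)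
    (hQ : (0 : Fin n → ℝ) ∈ interior (convexHull ℝ (Set.range fun i => fun j => (N i j : ℝ)))) :
    Set.BijOn (grad (u0 N)) (interior (Pset N)) Set.univ ∧
    ContDiffOn ℝ (⊤ : ℕ∞) (grad (u0 N)) (interior (Pset N)) ∧
    ∃ g : (Fin n → ℝ) → (Fin n → ℝ), ContDiff ℝ (⊤ : ℕ∞) g ∧
      (∀ y ∈ interior (Pset N), g (grad (u0 N) y) = y) ∧
      (∀ x, g x ∈ interior (Pset N) ∧ grad (u0 N) (g x) = x) := by
  have hI := interior_Pset N
  have hg : ∀ y ∈ interior (Pset N), grad (u0 N) y = Gm N y := fun y hy =>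
    grad_u0 N y (by rw [hI] at hy; exact hy)
  have hP : ∀ y ∈ interior (Pset N), ∀ i, 0 < lfun N i y := fun y hy => by
    rw [hI] at hy; exact hy
  have hinj : Set.InjOn (grad (u0 N)) (interior (Pset N)) := by
    intro y hy z hz h
    rw [hg y hy, hg z hz] at h
    exact Gm_inj N hQ y z (hP y hy) (hP z hz) h
  have hsurj : ∀ x, ∃ y, y ∈ interior (Pset N) ∧ grad (u0 N) y = x := by
    intro x
    obtain ⟨y, hy, h⟩ := Gm_surj N hQ x
    exact ⟨y, by rw [hI]; exact hy, h⟩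
  refine ⟨⟨fun _ _ => Set.mem_univ _, hinj, fun x _ => hsurj x⟩, ?_, ?_⟩
  · intro y hy
    exact ((contDiffAt_Gm N y (hP y hy)).contDiffWithinAt).congr hg (hg y hy)
  · choose g hg1 hg2 using hsurj
    refine ⟨g, ?_, fun y hy => hinj (hg1 _) hy (hg2 _), fun x => ⟨hg1 x, hg2 x⟩⟩
    rw [contDiff_iff_contDiffAt]
    intro x
    have hc := contDiffAt_Gm N (g x) (hP _ (hg1 x))
    obtain ⟨e, he⟩ := exists_equiv N hQ (g x) (hP _ (hg1 x))
    have hn0 : ((⊤ : ℕ∞) : WithTop ℕ∞) ≠ 0 := by simp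
    have hs := hc.hasStrictFDerivAt' he hn0
    have hx : Gm N (g x) = x := by rw [← hg _ (hg1 x), hg2]
    have h1 := hc.to_localInverse he hn0
    have h2 := hs.eventually_right_inverse
    have h3 := hs.localInverse_continuousAt
    have h4 := h3.eventually (p := fun z => z ∈ interior (Pset N))
      (by rw [hs.localInverse_apply_image]; exact isOpen_interior.mem_nhds (hg1 x))
    rw [hx] at h1 h2 h4
    refine h1.congr_of_eventuallyEq ?_
    filter_upwards [h2, h4] with z hz2 hz4
    refine hinj (hg1 z) hz4 ?_
    rw [hg2]
    exact ((hg _ hz4).trans hz2).symm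
end
end

section
/- The function F : ℝⁿ → ℝ defined by F(s) := ∫_P e^{⟨s,y⟩} dy is strictly convex and proper, i.e. F(s) → ∞ as |s| → ∞. -/
open MeasureTheory

noncomputable section

theorem dotp_cont {n : ℕ} (s : Fin n → ℝ) : Continuous (fun y => Real.exp (dotp s y)) := by
  unfold dotp
  fun_prop

theorem dotp_comb {n : ℕ} (s t y : Fin n → ℝ) (a b : ℝ) :
    dotp (a • s + b • t) y = a * dotp s y + b * dotp t y := by
  simp only [dotp, Finset.mul_sum, ← Finset.sum_add_distrib, Pi.add_apply, Pi.smul_apply,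
    smul_eq_mul]
  exact Finset.sum_congr rfl fun j _ => by ring

theorem F_strict {n : ℕ} (P : Set (Fin n → ℝ)) (hc : IsCompact P)
    (h0 : (0 : Fin n → ℝ) ∈ interior P) :
    StrictConvexOn ℝ Set.univ (fun s : Fin n → ℝ => ∫ y in P, Real.exp (dotp s y)) := by
  have hint : ∀ s : Fin n → ℝ, IntegrableOn (fun y => Real.exp (dotp s y)) P :=
    fun s => (dotp_cont s).continuousOn.integrableOn_compact hc
  refine ⟨convex_univ, ?_⟩
  intro s _ t _ hst a b ha hb hab
  have hle : ∀ y, 0 ≤ (a * Real.exp (dotp s y) + b * Real.exp (dotp t y)) -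
      Real.exp (dotp (a • s + b • t) y) := by
    intro y
    rw [dotp_comb]
    have := convexOn_exp.2 (Set.mem_univ (dotp s y)) (Set.mem_univ (dotp t y)) ha.le hb.le hab
    simp only [smul_eq_mul] at this
    linarith
  have hlt : ∀ y, dotp s y ≠ dotp t y → 0 < (a * Real.exp (dotp s y) + b * Real.exp (dotp t y)) -
      Real.exp (dotp (a • s + b • t) y) := by
    intro y hy
    rw [dotp_comb]
    have := strictConvexOn_exp.2 (Set.mem_univ (dotp s y)) (Set.mem_univ (dotp t y)) hy ha hb hab
    simp only [smul_eq_mul] at this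
    linarith
  have hi1 := ((hint s).const_mul a).add ((hint t).const_mul b)
  have hi := hi1.sub (hint (a • s + b • t))
  have hpos : 0 < ∫ y in P, ((a * Real.exp (dotp s y) + b * Real.exp (dotp t y)) -
      Real.exp (dotp (a • s + b • t) y)) := by
    rw [setIntegral_pos_iff_support_of_nonneg_ae (Filter.Eventually.of_forall hle) hi]
    have hUo : IsOpen (interior P ∩ {y | dotp s y ≠ dotp t y}) := by
      refine isOpen_interior.inter (isOpen_ne_fun ?_ ?_) <;> (unfold dotp; fun_prop)
    have hUn : (interior P ∩ {y | dotp s y ≠ dotp t y}).Nonempty := by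
      have h1 : Filter.Tendsto (fun e : ℝ => e • (s - t)) (nhdsWithin 0 (Set.Ioi 0))
          (nhds (0 : Fin n → ℝ)) := by
        have : Continuous (fun e : ℝ => e • (s - t)) := by fun_prop
        have := this.tendsto 0
        rw [zero_smul] at this
        exact this.mono_left nhdsWithin_le_nhds
      have h2 := h1.eventually (isOpen_interior.mem_nhds h0)
      obtain ⟨e, he, he0⟩ := (h2.and self_mem_nhdsWithin).exists
      have he0 : 0 < e := he0
      refine ⟨e • (s - t), he, ?_⟩
      intro h
      have h3 : e * ∑ j, (s j - t j) * (s j - t j) = 0 := by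
        have h' := sub_eq_zero.2 h
        rw [← h']
        simp only [dotp, Finset.mul_sum, ← Finset.sum_sub_distrib, Pi.sub_apply, Pi.smul_apply,
          smul_eq_mul]
        exact Finset.sum_congr rfl fun j _ => by ring
      have h4 := (mul_eq_zero.1 h3).resolve_left he0.ne'
      rw [Finset.sum_eq_zero_iff_of_nonneg (fun j _ => mul_self_nonneg _)] at h4
      apply hst
      funext j
      exact sub_eq_zero.1 (mul_self_eq_zero.1 (h4 j (Finset.mem_univ j)))
    refine lt_of_lt_of_le (hUo.measure_pos volume hUn) (measure_mono ?_)
    rintro y ⟨hy1, hy2⟩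
    exact ⟨(hlt y hy2).ne', interior_subset hy1⟩
  have e1 := integral_sub hi1 (hint (a • s + b • t))
  have e2 := integral_add ((hint s).const_mul a) ((hint t).const_mul b)
  simp only [Pi.add_apply] at e1
  rw [e1, e2, integral_const_mul, integral_const_mul] at hpos
  simp only [smul_eq_mul]
  linarith

theorem F_proper {n : ℕ} (P : Set (Fin n → ℝ)) (hc : IsCompact P)
    (h0 : (0 : Fin n → ℝ) ∈ interior P) :
    Filter.Tendsto (fun s : Fin n → ℝ => ∫ y in P, Real.exp (dotp s y))
      (Filter.cocompact (Fin n → ℝ)) Filter.atTop := by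
  have hint : ∀ s : Fin n → ℝ, IntegrableOn (fun y => Real.exp (dotp s y)) P :=
    fun s => (dotp_cont s).continuousOn.integrableOn_compact hc
  obtain ⟨R, hR, hRP⟩ := Metric.mem_nhds_iff.1 (mem_interior_iff_mem_nhds.1 h0)
  obtain ⟨r, rfl⟩ : ∃ r, R = 2 * r := ⟨R / 2, by ring⟩
  have hr : 0 < r := by linarith
  set c : ℝ := volume.real (Metric.ball (0 : Fin n → ℝ) (r / 2)) with hcdef
  have hcpos : 0 < c :=
    ENNReal.toReal_pos (Metric.measure_ball_pos _ _ (by linarith)).ne' measure_ball_lt_top.ne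
  have hbound : ∀ s : Fin n → ℝ, c * Real.exp (r / 2 * ‖s‖) ≤ ∫ y in P, Real.exp (dotp s y) := by
    intro s
    let y0 : Fin n → ℝ := fun j => if 0 ≤ s j then r else -r
    have hcoord : ∀ y ∈ Metric.ball y0 (r / 2), ∀ j, |y j - y0 j| < r / 2 := by
      intro y hy j
      have := (dist_pi_lt_iff (by linarith : 0 < r / 2)).1 hy j
      rwa [Real.dist_eq] at this
    have hsub : Metric.ball y0 (r / 2) ⊆ P := by
      intro y hy
      apply hRP
      rw [Metric.mem_ball, dist_pi_lt_iff hR]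
      intro j
      have h := abs_lt.1 (hcoord y hy j)
      rw [Real.dist_eq, Pi.zero_apply, sub_zero, abs_lt]
      simp only [y0] at h
      split_ifs at h <;> constructor <;> linarith [h.1, h.2]
    have hlow : ∀ y ∈ Metric.ball y0 (r / 2), Real.exp (r / 2 * ‖s‖) ≤ Real.exp (dotp s y) := by
      intro y hy
      apply Real.exp_le_exp.2
      have hj : ∀ j, r / 2 * |s j| ≤ s j * y j := by
        intro j
        have h := abs_lt.1 (hcoord y hy j)
        simp only [y0] at h
        split_ifs at h with hs
        · rw [abs_of_nonneg hs]; nlinarith [h.1, h.2]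
        · rw [abs_of_neg (not_le.1 hs)]; nlinarith [h.1, h.2, not_le.1 hs]
      have hn : ‖s‖ ≤ ∑ j, |s j| := by
        rw [pi_norm_le_iff_of_nonneg (Finset.sum_nonneg fun j _ => abs_nonneg _)]
        intro j
        exact Finset.single_le_sum (f := fun j => |s j|) (fun j _ => abs_nonneg _)
          (Finset.mem_univ j)
      calc r / 2 * ‖s‖ ≤ r / 2 * ∑ j, |s j| := by gcongr
        _ = ∑ j, r / 2 * |s j| := Finset.mul_sum _ _ _
        _ ≤ dotp s y := Finset.sum_le_sum fun j _ => hj j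
    have hcy : volume.real (Metric.ball y0 (r / 2)) = c := by
      rw [hcdef, Measure.real, Measure.real, Measure.addHaar_ball_center]
    calc c * Real.exp (r / 2 * ‖s‖) = ∫ y in Metric.ball y0 (r / 2), Real.exp (r / 2 * ‖s‖) := by
          rw [setIntegral_const, hcy, smul_eq_mul]
      _ ≤ ∫ y in Metric.ball y0 (r / 2), Real.exp (dotp s y) :=
          setIntegral_mono_on (integrableOn_const measure_ball_lt_top.ne) ((hint s).mono_set hsub)
            measurableSet_ball hlow
      _ ≤ _ := setIntegral_mono_set (hint s)
            (Filter.Eventually.of_forall fun y => (Real.exp_pos _).le)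
            (Filter.Eventually.of_forall hsub)
  refine Filter.tendsto_atTop_mono hbound ?_
  exact (Real.tendsto_exp_atTop.comp
    ((tendsto_norm_cocompact_atTop (E := Fin n → ℝ)).const_mul_atTop (by linarith))).const_mul_atTop
    hcpos

/-- `F(s) = ∫_P e^{⟨s,y⟩} dy` is strictly convex and proper (`F(s) → ∞` as `|s| → ∞`),
where `P` is a compact convex polytope with the origin in its interior. -/
theorem F_strictConvex_proper {n : ℕ} (V : Finset (Fin n → ℝ)) (P : Set (Fin n → ℝ))
    (hP : P = convexHull ℝ (V : Set (Fin n → ℝ)))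
    (h0 : (0 : Fin n → ℝ) ∈ interior P) :
    StrictConvexOn ℝ Set.univ (fun s : Fin n → ℝ => ∫ y in P, Real.exp (dotp s y)) ∧
    Filter.Tendsto (fun s : Fin n → ℝ => ∫ y in P, Real.exp (dotp s y))
      (Filter.cocompact (Fin n → ℝ)) Filter.atTop := by
  have hc : IsCompact P := hP ▸ V.finite_toSet.isCompact_convexHull ℝ
  exact ⟨F_strict P hc h0, F_proper P hc h0⟩
end
end

section
/- Suppose there exists a smooth strictly convex function φ : ℝⁿ → ℝ whose gradient map Dφ is a diffeomorphism from ℝⁿ onto the interior P° of P and which satisfies the real Monge–Ampère equation det(D²φ(x)) = exp(−c₀ − φ(x) − ⟨c, Dφ(x)⟩) for all x ∈ ℝⁿ, where c = (c₁,…,cₙ) ∈ ℝⁿ and c₀ ∈ ℝ are constants. Then necessarily ∫_P yᵢ e^{⟨c,y⟩} dy = 0 for every i = 1,…,n. -/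
open MeasureTheory

noncomputable section

/-- If a smooth strictly convex `φ : ℝⁿ → ℝ`, whose gradient map is a diffeomorphism
from `ℝⁿ` onto `P°`, solves `det D²φ = exp(-c₀ - φ - ⟨c, Dφ⟩)`, then necessarily
`∫_P yᵢ e^{⟨c,y⟩} dy = 0` for every `i` (Proposition 3.1). -/
theorem necessary_condition_on_c {n : ℕ} (V : Finset (Fin n → ℝ)) (P : Set (Fin n → ℝ))
    (hP : P = convexHull ℝ (V : Set (Fin n → ℝ)))
    (h0 : (0 : Fin n → ℝ) ∈ interior P)
    (c : Fin n → ℝ) (c₀ : ℝ) (φ : (Fin n → ℝ) → ℝ)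
    (hφ : ContDiff ℝ (⊤ : ℕ∞) φ)
    (hconv : StrictConvexOn ℝ Set.univ φ)
    (hbij : Set.BijOn (grad φ) Set.univ (interior P))
    (hinv : ContDiffOn ℝ (⊤ : ℕ∞) (Function.invFun (grad φ)) (interior P))
    (hMA : ∀ x, (hess φ x).det = Real.exp (-c₀ - φ x - dotp c (grad φ x))) :
    ∀ i, ∫ y in P, y i * Real.exp (dotp c y) = 0 := by
  have hgd : Differentiable ℝ (grad φ) := by
    rw [differentiable_pi]
    intro p
    have h1 : ContDiff ℝ 1 (fderiv ℝ φ) := hφ.fderiv_right (by norm_cast)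
    exact fun x => ((h1.differentiable (by simp)) x).clm_apply (differentiableAt_const _)
  have hdet : ∀ x, (fderiv ℝ (grad φ) x).det = (hess φ x).det := by
    intro x
    rw [ContinuousLinearMap.det, ← LinearMap.det_toMatrix', ← Matrix.det_transpose (hess φ x)]
    congr 1
    ext p q
    rw [LinearMap.toMatrix'_apply, Matrix.transpose_apply]
    have := (hasFDerivAt_pi'.1 (hgd x).hasFDerivAt p).fderiv
    simp only [hess, Matrix.of_apply]
    have h2 : (fun z => fderiv ℝ φ z (Pi.single p 1)) = fun z => grad φ z p := rfl
    rw [h2, this]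
    simp [Pi.single_apply, Pi.single, Function.update_apply]
    try rfl
  have hPc : IsCompact P := hP ▸ (V.finite_toSet.isCompact_convexHull (𝕜 := ℝ))
  have hPconv : Convex ℝ P := hP ▸ convex_convexHull ℝ _
  have hae : interior P =ᵐ[volume] P :=
    interior_ae_eq_of_null_frontier (hPconv.addHaar_frontier volume)
  have himg : grad φ '' Set.univ = interior P := hbij.image_eq
  have hder : ∀ x ∈ Set.univ, HasFDerivWithinAt (grad φ) (fderiv ℝ (grad φ) x) Set.univ x :=
    fun x _ => (hgd x).hasFDerivAt.hasFDerivWithinAt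
  have hdc : Continuous (fun y : Fin n → ℝ => dotp c y) := by unfold dotp; fun_prop
  have key : ∀ x, |(fderiv ℝ (grad φ) x).det| * Real.exp (dotp c (grad φ x))
      = Real.exp (-c₀ - φ x) := by
    intro x
    rw [hdet, hMA, abs_of_pos (Real.exp_pos _), ← Real.exp_add]
    congr 1; ring
  have hint : ∀ g : (Fin n → ℝ) → ℝ, Continuous g →
      Integrable (fun x => g (grad φ x) * Real.exp (-c₀ - φ x)) := by
    intro g hg
    have h1 : IntegrableOn (fun y => g y * Real.exp (dotp c y)) (grad φ '' Set.univ) volume := by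
      rw [himg]
      exact ((hg.mul (Real.continuous_exp.comp hdc)).continuousOn.integrableOn_compact hPc).mono_set
        interior_subset
    rw [integrableOn_image_iff_integrableOn_abs_det_fderiv_smul volume MeasurableSet.univ hder
      hbij.injOn, integrableOn_univ] at h1
    refine h1.congr (Filter.Eventually.of_forall fun x => ?_)
    simp only [smul_eq_mul]
    rw [← key]; ring
  intro i
  rw [← setIntegral_congr_set hae, ← himg,
    integral_image_eq_integral_abs_det_fderiv_smul volume MeasurableSet.univ hder hbij.injOn]
  rw [setIntegral_univ]
  have e1 : ∀ x, |(fderiv ℝ (grad φ) x).det| • (grad φ x i * Real.exp (dotp c (grad φ x)))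
      = grad φ x i * Real.exp (-c₀ - φ x) := by
    intro x
    rw [← key, smul_eq_mul]; ring
  simp only [e1]
  have hφd : Differentiable ℝ φ := hφ.differentiable (by simp)
  have hE : ∀ x, HasFDerivAt (fun x => Real.exp (-c₀ - φ x))
      (Real.exp (-c₀ - φ x) • (-(fderiv ℝ φ x))) x := by
    intro x
    exact ((hφd x).hasFDerivAt.const_sub (-c₀)).exp
  have hE' : ∀ x, fderiv ℝ (fun x => Real.exp (-c₀ - φ x)) x (Pi.single i 1)
      = -(grad φ x i * Real.exp (-c₀ - φ x)) := by
    intro x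
    rw [(hE x).fderiv]
    simp [grad]; ring
  have hI1 := hint (fun y => y i) (continuous_apply i)
  have hI0 := hint (fun _ => 1) continuous_const
  have := integral_mul_fderiv_eq_neg_fderiv_mul_of_integrable (μ := volume)
    (f := fun _ : Fin n → ℝ => (1 : ℝ)) (g := fun x => Real.exp (-c₀ - φ x)) (v := Pi.single i 1)
    (by simp) (by simp only [hE']; simpa using hI1.neg) (by simpa using hI0)
    (fun x _ => differentiableAt_const _) (fun x _ => (hE x).differentiableAt)
  simp only [hE'] at this
  simpa [integral_neg] using this
end
end

section
/- Fix ε₀ ∈ (0,1]. There exists a constant C > 0, depending only on n, the vectors n⁽ⁱ⁾ (equivalently on P), c, c₀ and ε₀, such that for every t ∈ [ε₀,1] and every solution φ of the continuity-method equation at parameter t, the infimum m_t := inf_{x ∈ ℝⁿ} w_t(x) of w_t := tφ + (1−t)φ⁰ satisfies |m_t| ≤ C. -/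
open MeasureTheory

noncomputable section

/-- The Legendre transform `φ⁰(x) = sup_{y ∈ P°} (⟨x,y⟩ - u⁰(y))`. -/
def phi0 {n d : ℕ} (N : Fin d → Fin n → ℤ) (x : Fin n → ℝ) : ℝ :=
  sSup ((fun y => dotp x y - u0 N y) '' interior (Pset N))

/-- The Euclidean norm of `x ∈ ℝⁿ`. -/
def eucNorm {n : ℕ} (x : Fin n → ℝ) : ℝ := Real.sqrt (∑ j, x j ^ 2)

/-- The function `w_t = tφ + (1-t)φ⁰`. -/
def wfun {n d : ℕ} (N : Fin d → Fin n → ℤ) (t : ℝ) (φ : (Fin n → ℝ) → ℝ)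
    (x : Fin n → ℝ) : ℝ :=
  t * φ x + (1 - t) * phi0 N x

/-- A solution of the continuity-method equation at parameter `t`: a smooth strictly
convex `φ : ℝⁿ → ℝ` whose gradient map is a diffeomorphism from `ℝⁿ` onto `P°`,
satisfying `det D²φ = exp(-c₀ - w_t - ⟨c, Dφ⟩)` with `w_t = tφ + (1-t)φ⁰`. -/
def IsSolution {n d : ℕ} (N : Fin d → Fin n → ℤ) (c : Fin n → ℝ) (c₀ t : ℝ)
    (φ : (Fin n → ℝ) → ℝ) : Prop :=
  ContDiff ℝ (⊤ : ℕ∞) φ ∧ StrictConvexOn ℝ Set.univ φ ∧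
  Set.BijOn (grad φ) Set.univ (interior (Pset N)) ∧
  ContDiffOn ℝ (⊤ : ℕ∞) (Function.invFun (grad φ)) (interior (Pset N)) ∧
  ∀ x, (hess φ x).det = Real.exp (-c₀ - wfun N t φ x - dotp c (grad φ x))

lemma aux_P_bdd {n d : ℕ} (N : Fin d → Fin n → ℤ)
    (hQ : (0 : Fin n → ℝ) ∈ interior (convexHull ℝ (Set.range fun i => fun j => (N i j : ℝ)))) :
    ∃ R > 0, ∀ y ∈ Pset N, ∀ j, |y j| ≤ R := by
  obtain ⟨δ, hδ, hball⟩ := Metric.isOpen_iff.1 isOpen_interior _ hQ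
  refine ⟨2 / δ, by positivity, fun y hy j => ?_⟩
  have hconv : ∀ v ∈ convexHull ℝ (Set.range fun i => fun j => (N i j : ℝ)),
      -1 ≤ ∑ j, y j * v j := by
    intro v hv
    have hc : Convex ℝ {v : Fin n → ℝ | -1 ≤ ∑ j, y j * v j} := by
      intro a ha b hb s t hs ht hst
      simp only [Set.mem_ofPred_eq, Pi.add_apply, Pi.smul_apply, smul_eq_mul] at *
      have : ∑ x, y x * (s * a x + t * b x) = s * ∑ x, y x * a x + t * ∑ x, y x * b x := by
        rw [Finset.mul_sum, Finset.mul_sum, ← Finset.sum_add_distrib]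
        exact Finset.sum_congr rfl fun x _ => by ring
      rw [this]
      nlinarith
    refine convexHull_min ?_ hc hv
    rintro _ ⟨i, rfl⟩
    exact hy i
  have key : ∀ e : ℝ, |e| < δ → -1 ≤ y j * e := by
    intro e he
    have hm : (Pi.single j e : Fin n → ℝ) ∈ Metric.ball (0 : Fin n → ℝ) δ := by
      rw [mem_ball_zero_iff, Pi.norm_single]
      simpa using he
    have := hconv _ (interior_subset (hball hm))
    simpa [Pi.single_apply] using this
  have h1 := key (δ/2) (by rw [abs_of_pos (by positivity)]; linarith)
  have h2 := key (-(δ/2)) (by rw [abs_neg, abs_of_pos (by positivity)]; linarith)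
  rw [abs_le, ← neg_div, div_le_iff₀ hδ, le_div_iff₀ hδ]
  constructor <;> nlinarith

lemma aux_zero_mem {n d : ℕ} (N : Fin d → Fin n → ℤ) :
    (0 : Fin n → ℝ) ∈ interior (Pset N) := by
  refine interior_mono (s := {y : Fin n → ℝ | ∀ i, -1 < ∑ j, y j * (N i j : ℝ)}) ?_ ?_
  · intro y hy i
    exact (hy i).le
  · rw [IsOpen.interior_eq]
    · intro i
      simp
    · have : {y : Fin n → ℝ | ∀ i, -1 < ∑ j, y j * (N i j : ℝ)}
          = ⋂ i, {y : Fin n → ℝ | -1 < ∑ j, y j * (N i j : ℝ)} := by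
        ext; simp
      rw [this]
      refine isOpen_iInter_of_finite fun i => ?_
      exact isOpen_lt continuous_const (by fun_prop)

lemma aux_dotp_le {n : ℕ} (x y : Fin n → ℝ) (R : ℝ) (h : ∀ j, |y j| ≤ R) :
    |dotp x y| ≤ n * R * ‖x‖ := by
  unfold dotp
  calc |∑ j, x j * y j| ≤ ∑ j, |x j * y j| := Finset.abs_sum_le_sum_abs _ _
    _ ≤ ∑ j : Fin n, ‖x‖ * R := by
        refine Finset.sum_le_sum fun j _ => ?_
        rw [abs_mul]
        exact mul_le_mul (norm_le_pi_norm x j) (h j) (abs_nonneg _) (norm_nonneg _)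
    _ = n * R * ‖x‖ := by simp; ring

lemma aux_u0_ge {n d : ℕ} (N : Fin d → Fin n → ℤ) (y : Fin n → ℝ) (hy : y ∈ Pset N) :
    -(d : ℝ) ≤ u0 N y := by
  unfold u0
  have : ∑ i : Fin d, (-1 : ℝ) ≤ ∑ i, lfun N i y * Real.log (lfun N i y) := by
    refine Finset.sum_le_sum fun i _ => ?_
    have h0 : 0 ≤ lfun N i y := by have := hy i; unfold lfun; linarith
    rcases h0.eq_or_lt with h | h
    · rw [← h]; simp
    · have := Real.one_sub_inv_le_log_of_pos h
      have h3 := mul_le_mul_of_nonneg_left this h0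
      have h4 : lfun N i y * (1 - (lfun N i y)⁻¹) = lfun N i y - 1 := by field_simp
      linarith
  simpa using this

lemma aux_phi0_bdd {n d : ℕ} (N : Fin d → Fin n → ℤ) (R : ℝ)
    (hR : ∀ y ∈ Pset N, ∀ j, |y j| ≤ R) (x : Fin n → ℝ) :
    BddAbove ((fun y => dotp x y - u0 N y) '' interior (Pset N)) := by
  refine ⟨n * R * ‖x‖ + d, ?_⟩
  rintro _ ⟨y, hy, rfl⟩
  have hy' := interior_subset hy
  have h1 := (abs_le.1 (aux_dotp_le x y R (hR y hy'))).2
  have h2 := aux_u0_ge N y hy'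
  simp only
  linarith

lemma aux_phi0_nonneg {n d : ℕ} (N : Fin d → Fin n → ℤ) (R : ℝ)
    (hR : ∀ y ∈ Pset N, ∀ j, |y j| ≤ R) (x : Fin n → ℝ) : 0 ≤ phi0 N x := by
  have : dotp x 0 - u0 N 0 ≤ phi0 N x := le_csSup (aux_phi0_bdd N R hR x) ⟨0, aux_zero_mem N, rfl⟩
  simpa [dotp, u0, lfun] using this

lemma aux_phi0_convex {n d : ℕ} (N : Fin d → Fin n → ℤ) (R : ℝ)
    (hR : ∀ y ∈ Pset N, ∀ j, |y j| ≤ R) : ConvexOn ℝ Set.univ (phi0 N) := by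
  refine ⟨convex_univ, fun x _ z _ a b ha hb hab => ?_⟩
  refine csSup_le (Set.Nonempty.image _ ⟨0, aux_zero_mem N⟩) ?_
  rintro _ ⟨y, hy, rfl⟩
  have h1 : dotp x y - u0 N y ≤ phi0 N x := le_csSup (aux_phi0_bdd N R hR x) ⟨y, hy, rfl⟩
  have h2 : dotp z y - u0 N y ≤ phi0 N z := le_csSup (aux_phi0_bdd N R hR z) ⟨y, hy, rfl⟩
  have h3 : dotp (a • x + b • z) y = a * dotp x y + b * dotp z y := by
    unfold dotp
    rw [Finset.mul_sum, Finset.mul_sum, ← Finset.sum_add_distrib]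
    exact Finset.sum_congr rfl fun x _ => by simp; ring
  have hb' : b = 1 - a := by linarith
  simp only [smul_eq_mul, h3]
  have h4 := mul_le_mul_of_nonneg_left h1 ha
  have h5 := mul_le_mul_of_nonneg_left h2 hb
  have h6 : u0 N y = a * u0 N y + b * u0 N y := by rw [hb']; ring
  linarith

lemma aux_phi0_lip {n d : ℕ} (N : Fin d → Fin n → ℤ) (R : ℝ)
    (hR : ∀ y ∈ Pset N, ∀ j, |y j| ≤ R) (x z : Fin n → ℝ) :
    phi0 N x ≤ phi0 N z + n * R * ‖x - z‖ := by
  refine csSup_le (Set.Nonempty.image _ ⟨0, aux_zero_mem N⟩) ?_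
  rintro _ ⟨y, hy, rfl⟩
  have h2 : dotp z y - u0 N y ≤ phi0 N z := le_csSup (aux_phi0_bdd N R hR z) ⟨y, hy, rfl⟩
  have h1 := (abs_le.1 (aux_dotp_le (x - z) y R (hR y (interior_subset hy)))).2
  have h3 : dotp (x - z) y = dotp x y - dotp z y := by
    simp [dotp, sub_mul, Finset.sum_sub_distrib]
  simp only
  linarith

lemma aux_phi0_cont {n d : ℕ} (N : Fin d → Fin n → ℤ) (R : ℝ) (hR0 : 0 < R)
    (hR : ∀ y ∈ Pset N, ∀ j, |y j| ≤ R) : Continuous (phi0 N) := by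
  refine (LipschitzWith.of_le_add_mul (⟨n * R, by positivity⟩ : NNReal) fun x y => ?_).continuous
  rw [dist_eq_norm]
  exact aux_phi0_lip N R hR x y

lemma aux_fderiv {n : ℕ} (f : (Fin n → ℝ) → ℝ) (x v : Fin n → ℝ) :
    fderiv ℝ f x v = dotp (grad f x) v := by
  unfold dotp grad
  conv_lhs => rw [← Finset.univ_sum_single v, map_sum]
  refine Finset.sum_congr rfl fun j _ => ?_
  have : (Pi.single j (v j) : Fin n → ℝ) = v j • Pi.single j 1 := by
    rw [← Pi.single_smul]; simp
  rw [this, map_smul, smul_eq_mul, mul_comm]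

lemma aux_grad_ineq {n : ℕ} (f : (Fin n → ℝ) → ℝ) (hf : Differentiable ℝ f)
    (hc : ConvexOn ℝ Set.univ f) (x z : Fin n → ℝ) :
    f x + dotp (grad f x) (z - x) ≤ f z := by
  have hc' : ConvexOn ℝ Set.univ (fun s : ℝ => f (AffineMap.lineMap x z s)) := by
    have := hc.comp_affineMap (AffineMap.lineMap x z : ℝ →ᵃ[ℝ] (Fin n → ℝ))
    rw [Set.preimage_univ] at this
    exact this
  have hd : HasDerivAt (fun s : ℝ => f (AffineMap.lineMap x z s)) (dotp (grad f x) (z - x)) 0 := by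
    rw [← aux_fderiv]
    have h1 : HasDerivAt (fun s : ℝ => (AffineMap.lineMap x z s : Fin n → ℝ)) (z - x) 0 :=
      AffineMap.hasDerivAt_lineMap
    have h2 : HasFDerivAt f (fderiv ℝ f x) ((AffineMap.lineMap x z (0:ℝ) : Fin n → ℝ)) := by
      simpa using (hf x).hasFDerivAt
    exact h2.comp_hasDerivAt (0:ℝ) h1
  have := hc'.le_slope_of_hasDerivAt (Set.mem_univ 0) (Set.mem_univ 1) one_pos hd
  simp [slope_def_field] at this
  linarith

lemma aux_vol {n : ℕ} (f : (Fin n → ℝ) → ℝ) (hf : ContDiff ℝ (⊤ : ℕ∞) f)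
    (hinj : Function.Injective (grad f)) (hpos : ∀ x, 0 < (hess f x).det)
    (s : Set (Fin n → ℝ)) (hs : MeasurableSet s) :
    volume (grad f '' s) = ∫⁻ x in s, ENNReal.ofReal ((hess f x).det) := by
  have hd : ∀ q : Fin n, Differentiable ℝ (fun z => fderiv ℝ f z (Pi.single q 1)) := by
    intro q
    have : ContDiff ℝ 1 (fderiv ℝ f) := hf.fderiv_right (by norm_cast)
    exact (this.differentiable (by simp)).clm_apply (differentiable_const _)
  have hg : ∀ x, HasFDerivAt (grad f) (ContinuousLinearMap.pi
      fun q => fderiv ℝ (fun z => fderiv ℝ f z (Pi.single q 1)) x) x := by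
    intro x
    rw [hasFDerivAt_pi']
    intro q
    have := (hd q x).hasFDerivAt
    exact this
  have := lintegral_abs_det_fderiv_eq_addHaar_image volume hs
    (fun x _ => (hg x).hasFDerivWithinAt) (hinj.injOn)
  rw [← this]
  refine lintegral_congr fun x => ?_
  have hdet : (ContinuousLinearMap.pi
      fun q => fderiv ℝ (fun z => fderiv ℝ f z (Pi.single q 1)) x).det = (hess f x).det := by
    rw [ContinuousLinearMap.det, ← LinearMap.det_toMatrix', ← Matrix.det_transpose]
    congr 1
  rw [hdet, abs_of_pos (hpos x)]

lemma aux_simplex {n : ℕ} (A : Set (Fin n → ℝ)) (hA : IsCompact A) (x0 : Fin n → ℝ)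
    (hx0 : x0 ∈ interior A) :
    ∃ v ∈ A, ∃ U : Matrix (Fin n) (Fin n) ℝ, U.det ≠ 0 ∧ (∀ i, v + U i ∈ A) ∧
      ∀ s : Fin n → ℝ, v + Matrix.vecMul s U ∈ A → ‖s‖ ≤ 1 := by
  let F : (Fin n → ℝ) × (Fin n → Fin n → ℝ) → ℝ :=
    fun p => |(Matrix.of fun i => p.2 i - p.1 : Matrix (Fin n) (Fin n) ℝ).det|
  have hF : Continuous F := by
    refine continuous_abs.comp (Continuous.matrix_det ?_)
    refine continuous_matrix fun i j => ?_
    simp only [Matrix.of_apply, Pi.sub_apply]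
    fun_prop
  have hcomp : IsCompact (A ×ˢ Set.pi Set.univ fun _ : Fin n => A) :=
    hA.prod (isCompact_univ_pi fun _ => hA)
  obtain ⟨δ, hδ, hball⟩ := Metric.isOpen_iff.1 isOpen_interior _ hx0
  have hsub : Metric.ball x0 δ ⊆ A := hball.trans interior_subset
  let p0 : (Fin n → ℝ) × (Fin n → Fin n → ℝ) := (x0, fun i => x0 + Pi.single i (δ/2))
  have hp0 : p0 ∈ A ×ˢ Set.pi Set.univ fun _ : Fin n => A := by
    refine ⟨interior_subset hx0, fun i _ => hsub ?_⟩
    simp only [p0, Metric.mem_ball, dist_eq_norm, add_sub_cancel_left, Pi.norm_single]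
    rw [Real.norm_of_nonneg (by positivity)]
    linarith
  obtain ⟨⟨v, u⟩, ⟨hv, hu⟩, hmax⟩ := hcomp.exists_isMaxOn ⟨p0, hp0⟩ hF.continuousOn
  have hFp0 : 0 < F p0 := by
    have : (Matrix.of fun i => p0.2 i - p0.1 : Matrix (Fin n) (Fin n) ℝ)
        = Matrix.diagonal fun _ => δ / 2 := by
      ext i j
      simp [p0, Matrix.diagonal_apply, Pi.single_apply, eq_comm]
    simp only [F, this, Matrix.det_diagonal]
    simp only [Finset.prod_const]
    positivity
  set U : Matrix (Fin n) (Fin n) ℝ := Matrix.of fun i => u i - v with hU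
  have hdet : 0 < |U.det| := lt_of_lt_of_le hFp0 (hmax hp0)
  have hUi : ∀ i, U i = u i - v := fun i => rfl
  refine ⟨v, hv, U, abs_pos.1 hdet, fun i => ?_, fun s hs => ?_⟩
  · rw [hUi, add_sub_cancel]
    exact hu i trivial
  · rw [pi_norm_le_iff_of_nonneg zero_le_one]
    intro i
    let q : (Fin n → ℝ) × (Fin n → Fin n → ℝ) :=
      (v, Function.update u i (v + Matrix.vecMul s U))
    have hq : q ∈ A ×ˢ Set.pi Set.univ fun _ : Fin n => A := by
      refine ⟨hv, fun k _ => ?_⟩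
      by_cases hk : k = i
      · subst hk
        simpa [q] using hs
      · simpa [q, Function.update_of_ne hk] using hu k trivial
    have h1 : F q ≤ F (v, u) := hmax hq
    have h2 : (Matrix.of fun k => q.2 k - q.1 : Matrix (Fin n) (Fin n) ℝ)
        = U.updateRow i (∑ k, s k • U k) := by
      ext k j
      by_cases hk : k = i
      · subst hk
        simp [q, Matrix.vecMul, dotProduct]
      · simp [q, hk, hU]
    simp only [F] at h1
    rw [h2, Matrix.det_updateRow_sum, smul_eq_mul, abs_mul] at h1
    rw [Real.norm_eq_abs]
    change |s i| * |U.det| ≤ |U.det| at h1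
    nlinarith

lemma aux_exp_int (n : ℕ) :
    (∫⁻ y : Fin n → ℝ, ENNReal.ofReal (Real.exp (-(‖y‖ / 2)))) < ⊤ := by
  have h := finite_integral_one_add_norm (E := Fin n → ℝ) (μ := volume) (r := ((n + 1 : ℕ) : ℝ))
    (by simp)
  set K : ℝ := Real.exp (1/2) * 2 ^ (n+1) * (n+1).factorial with hK
  have hK0 : 0 ≤ K := by positivity
  calc _ ≤ ∫⁻ y : Fin n → ℝ, ENNReal.ofReal K * ENNReal.ofReal ((1 + ‖y‖) ^ (-((n + 1 : ℕ) : ℝ))) := by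
        refine lintegral_mono fun y => ?_
        rw [← ENNReal.ofReal_mul hK0]
        refine ENNReal.ofReal_le_ofReal ?_
        have hy : 0 < 1 + ‖y‖ := by positivity
        have h1 := Real.pow_div_factorial_le_exp ((1 + ‖y‖)/2) (by positivity) (n+1)
        rw [Real.rpow_neg hy.le, Real.rpow_natCast]
        have h2 : Real.exp (-(‖y‖/2)) = Real.exp (1/2) / Real.exp ((1+‖y‖)/2) := by
          rw [← Real.exp_sub]; congr 1; ring
        rw [h2, hK, div_le_iff₀ (Real.exp_pos _)]
        have h3 : (1 + ‖y‖)^(n+1) ≤ 2^(n+1) * (n+1).factorial * Real.exp ((1+‖y‖)/2) := by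
          rw [div_pow, div_div, div_le_iff₀ (by positivity)] at h1
          linarith
        have h4 : 1 ≤ 2^(n+1) * (n+1).factorial * Real.exp ((1+‖y‖)/2) * ((1 + ‖y‖)^(n+1))⁻¹ := by
          rw [← div_eq_mul_inv, le_div_iff₀ (by positivity), one_mul]
          exact h3
        have h5 := mul_le_mul_of_nonneg_left h4 (Real.exp_pos (1/2)).le
        linarith
    _ = ENNReal.ofReal K * _ := lintegral_const_mul' _ _ ENNReal.ofReal_ne_top
    _ < ⊤ := ENNReal.mul_lt_top ENNReal.ofReal_lt_top h

lemma aux_w_convex {n d : ℕ} (N : Fin d → Fin n → ℤ) (R : ℝ)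
    (hR : ∀ y ∈ Pset N, ∀ j, |y j| ≤ R) (t : ℝ) (ht0 : 0 < t) (ht1 : t ≤ 1)
    (φ : (Fin n → ℝ) → ℝ) (hφ : ConvexOn ℝ Set.univ φ) :
    ConvexOn ℝ Set.univ (wfun N t φ) := by
  have := (hφ.smul ht0.le).add ((aux_phi0_convex N R hR).smul (sub_nonneg.2 ht1))
  exact this

lemma aux_grad_mem {n d : ℕ} {N : Fin d → Fin n → ℤ} {φ : (Fin n → ℝ) → ℝ}
    (h : Set.BijOn (grad φ) Set.univ (interior (Pset N))) (x : Fin n → ℝ) :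
    grad φ x ∈ Pset N := interior_subset (h.mapsTo (Set.mem_univ x))

lemma aux_dotp_sub {n : ℕ} (a b c : Fin n → ℝ) : dotp a (b - c) = dotp a b - dotp a c := by
  simp [dotp, mul_sub, Finset.sum_sub_distrib]

lemma aux_dotp_comm {n : ℕ} (a b : Fin n → ℝ) : dotp a b = dotp b a := by
  simp [dotp, mul_comm]

lemma aux_w_lip {n d : ℕ} (N : Fin d → Fin n → ℤ) (R : ℝ)
    (hR : ∀ y ∈ Pset N, ∀ j, |y j| ≤ R) (t : ℝ) (ht0 : 0 < t) (ht1 : t ≤ 1)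
    (φ : (Fin n → ℝ) → ℝ) (hφ : ConvexOn ℝ Set.univ φ) (hd : Differentiable ℝ φ)
    (hb : Set.BijOn (grad φ) Set.univ (interior (Pset N))) (x z : Fin n → ℝ) :
    wfun N t φ x ≤ wfun N t φ z + n * R * ‖x - z‖ := by
  have h1 := aux_phi0_lip N R hR x z
  have h2 := aux_grad_ineq φ hd hφ x z
  have h3 := (abs_le.1 (aux_dotp_le (z - x) (grad φ x) R (hR _ (aux_grad_mem hb x)))).1
  rw [aux_dotp_comm, norm_sub_rev] at h3
  have h4 : φ x ≤ φ z + n * R * ‖x - z‖ := by linarith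
  unfold wfun
  have h5 := mul_le_mul_of_nonneg_left h4 ht0.le
  have h6 := mul_le_mul_of_nonneg_left h1 (sub_nonneg.2 ht1)
  linarith

lemma aux_sublevel {n d : ℕ} (N : Fin d → Fin n → ℤ) (R : ℝ)
    (hR : ∀ y ∈ Pset N, ∀ j, |y j| ≤ R) (t : ℝ) (ht0 : 0 < t) (ht1 : t ≤ 1)
    (φ : (Fin n → ℝ) → ℝ) (hφ : ConvexOn ℝ Set.univ φ) (hd : Differentiable ℝ φ)
    (hb : Set.BijOn (grad φ) Set.univ (interior (Pset N))) (s : ℝ) :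
    Bornology.IsBounded {x | wfun N t φ x ≤ s} := by
  obtain ⟨δ, hδ, hball⟩ := Metric.isOpen_iff.1 isOpen_interior _ (aux_zero_mem N)
  have key : ∀ (j : Fin n) (e : ℝ), |e| < δ → ∃ C, ∀ x, e * x j ≤ φ x + C := by
    intro j e he
    have hm : (Pi.single j e : Fin n → ℝ) ∈ Metric.ball (0 : Fin n → ℝ) δ := by
      rw [mem_ball_zero_iff, Pi.norm_single]
      simpa using he
    obtain ⟨y, -, hy⟩ := hb.surjOn (hball hm)
    refine ⟨dotp (Pi.single j e) y - φ y, fun x => ?_⟩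
    have := aux_grad_ineq φ hd hφ y x
    rw [hy, aux_dotp_sub] at this
    have h2 : dotp (Pi.single j e) x = e * x j := by simp [dotp, Pi.single_apply]
    linarith
  choose C1 hC1 using fun j => key j (δ/2) (by rw [abs_of_pos (by positivity)]; linarith)
  choose C2 hC2 using fun j => key j (-(δ/2)) (by rw [abs_neg, abs_of_pos (by positivity)]; linarith)
  refine (Metric.isBounded_Icc (fun j => -((s / t + C2 j) / (δ/2)))
    (fun j => (s / t + C1 j) / (δ/2))).subset ?_
  intro x hx
  have hx' : wfun N t φ x ≤ s := hx
  have h0 := mul_nonneg (sub_nonneg.2 ht1) (aux_phi0_nonneg N R hR x)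
  have h1 : φ x ≤ s / t := by
    rw [le_div_iff₀ ht0]
    unfold wfun at hx'
    linarith
  constructor
  · intro j
    have := hC2 j x
    simp only
    rw [neg_le, le_div_iff₀ (by positivity)]
    linarith
  · intro j
    have := hC1 j x
    simp only
    rw [le_div_iff₀ (by positivity)]
    linarith

lemma aux_w_cont {n d : ℕ} (N : Fin d → Fin n → ℤ) (R : ℝ) (hR0 : 0 < R)
    (hR : ∀ y ∈ Pset N, ∀ j, |y j| ≤ R) (t : ℝ)
    (φ : (Fin n → ℝ) → ℝ) (hd : Differentiable ℝ φ) : Continuous (wfun N t φ) := by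
  have h1 := aux_phi0_cont N R hR0 hR
  have h2 := hd.continuous
  unfold wfun
  fun_prop

lemma aux_exists_min {n d : ℕ} (N : Fin d → Fin n → ℤ) (R : ℝ) (hR0 : 0 < R)
    (hR : ∀ y ∈ Pset N, ∀ j, |y j| ≤ R) (t : ℝ) (ht0 : 0 < t) (ht1 : t ≤ 1)
    (φ : (Fin n → ℝ) → ℝ) (hφ : ConvexOn ℝ Set.univ φ) (hd : Differentiable ℝ φ)
    (hb : Set.BijOn (grad φ) Set.univ (interior (Pset N))) :
    ∃ x0, ∀ x, wfun N t φ x0 ≤ wfun N t φ x := by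
  have hc := aux_w_cont N R hR0 hR t φ hd
  have hcomp : IsCompact {x | wfun N t φ x ≤ wfun N t φ 0} :=
    Metric.isCompact_of_isClosed_isBounded (isClosed_le hc continuous_const)
      (aux_sublevel N R hR t ht0 ht1 φ hφ hd hb _)
  obtain ⟨x0, hx0, hmin⟩ := hcomp.exists_isMinOn ⟨0, le_refl (wfun N t φ 0)⟩ hc.continuousOn
  refine ⟨x0, fun x => ?_⟩
  by_cases h : wfun N t φ x ≤ wfun N t φ 0
  · exact hmin h
  · exact le_trans hx0 (not_le.1 h).le

lemma aux_lower {n d : ℕ} (N : Fin d → Fin n → ℤ) (R : ℝ) (hR0 : 0 < R)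
    (hR : ∀ y ∈ Pset N, ∀ j, |y j| ≤ R) (c : Fin n → ℝ) (c₀ t : ℝ) (ht0 : 0 < t) (ht1 : t ≤ 1)
    (φ : (Fin n → ℝ) → ℝ) (h : IsSolution N c c₀ t φ) (x0 : Fin n → ℝ) :
    ENNReal.ofReal (Real.exp (-c₀ - n * R * ‖c‖ - n * R - wfun N t φ x0) * 2 ^ n) ≤
      volume (interior (Pset N)) := by
  obtain ⟨hs, hconv, hb, -, heq⟩ := h
  have hd : Differentiable ℝ φ := hs.differentiable (by simp)
  have hinj : Function.Injective (grad φ) := Set.injOn_univ.1 hb.injOn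
  have hv := aux_vol φ hs hinj (fun x => by rw [heq]; exact Real.exp_pos _)
    (Metric.closedBall x0 1) measurableSet_closedBall
  calc _ = ∫⁻ x in Metric.closedBall x0 1,
        ENNReal.ofReal (Real.exp (-c₀ - n * R * ‖c‖ - n * R - wfun N t φ x0)) := by
        rw [setLIntegral_const, Real.volume_pi_closedBall _ zero_le_one,
          ENNReal.ofReal_mul (Real.exp_pos _).le]
        simp
    _ ≤ ∫⁻ x in Metric.closedBall x0 1, ENNReal.ofReal ((hess φ x).det) := by
        refine setLIntegral_mono' measurableSet_closedBall fun x hx => ?_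
        refine ENNReal.ofReal_le_ofReal ?_
        rw [heq, Real.exp_le_exp]
        have h1 := aux_w_lip N R hR t ht0 ht1 φ hconv.convexOn hd hb x x0
        have h2 := (abs_le.1 (aux_dotp_le c (grad φ x) R (hR _ (aux_grad_mem hb x)))).2
        rw [Metric.mem_closedBall, dist_eq_norm] at hx
        have h3 : n * R * ‖x - x0‖ ≤ n * R * 1 := by gcongr
        linarith
    _ = _ := hv.symm
    _ ≤ _ := measure_mono (by
        rintro _ ⟨x, -, rfl⟩
        exact hb.mapsTo (Set.mem_univ x))

lemma aux_box {n : ℕ} (A : Set (Fin n → ℝ)) (hA : Convex ℝ A) (v : Fin n → ℝ) (hv : v ∈ A)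
    (U : Matrix (Fin n) (Fin n) ℝ) (hU : ∀ i, v + U i ∈ A) (s : Fin n → ℝ)
    (hs : ∀ i, 0 ≤ s i) (hs1 : ∑ i, s i ≤ 1) : v + Matrix.vecMul s U ∈ A := by
  let wt : Option (Fin n) → ℝ := fun o => o.elim (1 - ∑ i, s i) s
  let z : Option (Fin n) → (Fin n → ℝ) := fun o => o.elim v (fun i => v + U i)
  have h := hA.sum_mem (t := Finset.univ) (w := wt) (z := z) ?_ ?_ ?_
  · rw [Fintype.sum_option] at h
    convert h using 1
    simp only [wt, z, Option.elim]
    rw [Matrix.vecMul_eq_sum]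
    simp only [smul_add, Finset.sum_add_distrib, ← Finset.sum_smul, sub_smul, one_smul]
    abel
  · rintro (_ | i) -
    · simpa [wt] using hs1
    · simpa [wt] using hs i
  · rw [Fintype.sum_option]
    simp [wt]
  · rintro (_ | i) -
    · simpa [z] using hv
    · simpa [z] using hU i

lemma aux_upper {n d : ℕ} (hn : 1 ≤ n) (N : Fin d → Fin n → ℤ) (R : ℝ) (hR0 : 0 < R)
    (hR : ∀ y ∈ Pset N, ∀ j, |y j| ≤ R) (c : Fin n → ℝ) (c₀ t ε₀ : ℝ) (hε : 0 < ε₀)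
    (htε : ε₀ ≤ t) (ht1 : t ≤ 1)
    (φ : (Fin n → ℝ) → ℝ) (h : IsSolution N c c₀ t φ) (x0 : Fin n → ℝ)
    (hmin : ∀ x, wfun N t φ x0 ≤ wfun N t φ x) :
    ∃ D > 0, ENNReal.ofReal (Real.exp (-c₀ - n * R * ‖c‖ - wfun N t φ x0 - 1)) *
        (ENNReal.ofReal D * ENNReal.ofReal ((2 * (1 / (2 * n) / 2)) ^ n)) ≤
        ENNReal.ofReal D⁻¹ * ENNReal.ofReal ((2 * (2 * (2 / ε₀) / (1 / (2 * n)))) ^ n) ∧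
      volume (interior (Pset N)) ≤
        ENNReal.ofReal (Real.exp (-c₀ + n * R * ‖c‖ - wfun N t φ x0 + 2)) * (ENNReal.ofReal D *
          ∫⁻ y : Fin n → ℝ, ENNReal.ofReal (Real.exp (-(‖y‖ / 2)))) := by
  obtain ⟨hs, hconv, hb, -, heq⟩ := h
  have ht0 : 0 < t := hε.trans_le htε
  have hd : Differentiable ℝ φ := hs.differentiable (by simp)
  have hinj : Function.Injective (grad φ) := Set.injOn_univ.1 hb.injOn
  have hvol := aux_vol φ hs hinj (fun x => by rw [heq]; exact Real.exp_pos _)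
  have hφc := hconv.convexOn
  have hwc := aux_w_convex N R hR t ht0 ht1 φ hφc
  have hw := aux_w_cont N R hR0 hR t φ hd
  set m := wfun N t φ x0 with hm
  set K : ℝ := n * R * ‖c‖ with hK
  have hcK : ∀ x, |dotp c (grad φ x)| ≤ K := fun x =>
    aux_dotp_le c (grad φ x) R (hR _ (aux_grad_mem hb x))
  set A : Set (Fin n → ℝ) := {x | wfun N t φ x ≤ m + 1} with hA
  have hAcomp : IsCompact A :=
    Metric.isCompact_of_isClosed_isBounded (isClosed_le hw continuous_const)
      (aux_sublevel N R hR t ht0 ht1 φ hφc hd hb _)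
  have hAconv : Convex ℝ A := by
    have := hwc.convex_le (m + 1)
    simpa using this
  have hx0A : x0 ∈ interior A := by
    refine interior_mono (s := {x | wfun N t φ x < m + 1}) (fun x hx => ?_) ?_
    · exact (show wfun N t φ x < m + 1 from hx).le
    rw [(isOpen_lt hw continuous_const).interior_eq]
    exact lt_add_one m
  obtain ⟨v, hvA, U, hU, hUA, hUs⟩ := aux_simplex A hAcomp x0 hx0A
  have hUu : IsUnit U.det := isUnit_iff_ne_zero.2 hU
  let W : (Fin n → ℝ) →ₗ[ℝ] (Fin n → ℝ) := Matrix.toLin' (U⁻¹).transpose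
  have hWx : ∀ x, W x = Matrix.vecMul x U⁻¹ := fun x => by
    simp [W, Matrix.mulVec_transpose]
  have hWU : ∀ x, Matrix.vecMul (W x) U = x := fun x => by
    rw [hWx, Matrix.vecMul_vecMul, Matrix.nonsing_inv_mul _ hUu, Matrix.vecMul_one]
  have hWdet : LinearMap.det W = (U.det)⁻¹ := by
    simp [W, LinearMap.det_toLin', Matrix.det_nonsing_inv]
  have hWdet0 : LinearMap.det W ≠ 0 := by rw [hWdet]; exact inv_ne_zero hU
  have hWA : ∀ x ∈ A, ‖W (x - v)‖ ≤ 1 := by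
    intro x hx
    apply hUs
    rw [hWU]
    simpa using hx
  have hWA2 : ∀ x ∈ A, ‖W (x - x0)‖ ≤ 2 := by
    intro x hx
    have : W (x - x0) = W (x - v) - W (x0 - v) := by rw [← map_sub]; congr 1; abel
    rw [this]
    have := norm_sub_le (W (x - v)) (W (x0 - v))
    linarith [hWA x hx, hWA x0 (interior_subset hx0A)]
  have hgrow : ∀ x, m - 2 + ‖W (x - x0)‖ / 2 ≤ wfun N t φ x := by
    intro x
    by_cases hx : wfun N t φ x ≤ m + 1
    · have := hWA2 x hx
      have := hmin x
      linarith
    · rw [not_le] at hx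
      set s := wfun N t φ x - m with hsdef
      have hs1 : 1 < s := by linarith
      have hs0 : 0 < s := by linarith
      have hinv : s⁻¹ ≤ 1 := inv_le_one_of_one_le₀ hs1.le
      have hy := hwc.2 (Set.mem_univ x0) (Set.mem_univ x) (sub_nonneg.2 hinv)
        (inv_pos.2 hs0).le (by ring)
      have hyA : (1 - s⁻¹) • x0 + s⁻¹ • x ∈ A := by
        refine hy.trans ?_
        simp only [smul_eq_mul]
        have : wfun N t φ x = m + s := by rw [hsdef]; ring
        rw [this, ← hm]
        have : s⁻¹ * s = 1 := inv_mul_cancel₀ hs0.ne'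
        nlinarith
      have h2 := hWA2 _ hyA
      have h3 : (1 - s⁻¹) • x0 + s⁻¹ • x - x0 = s⁻¹ • (x - x0) := by
        rw [sub_smul, smul_sub, one_smul]; abel
      rw [h3, map_smul, norm_smul, Real.norm_of_nonneg (inv_pos.2 hs0).le,
        inv_mul_le_iff₀ hs0] at h2
      linarith
  have hD : |(LinearMap.det W)⁻¹| = |U.det| := by rw [hWdet, inv_inv]
  refine ⟨|U.det|, abs_pos.2 hU, ?_, ?_⟩
  · have hn0 : (0:ℝ) < n := by exact_mod_cast hn
    set r : ℝ := 1 / (2 * n) with hr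
    have hr0 : 0 < r := by positivity
    have hrn : n * (2 * r) = 1 := by rw [hr]; field_simp
    set M : ℝ := 2 / ε₀ with hM
    have hM0 : 0 < M := by positivity
    set z0 : Fin n → ℝ := v + Matrix.vecMul (fun _ => r) U with hz0
    have hbox : ∀ s : Fin n → ℝ, ‖s‖ ≤ r → z0 + Matrix.vecMul s U ∈ A := by
      intro s hs
      have hsi : ∀ i, |s i| ≤ r := fun i => (norm_le_pi_norm s i).trans hs
      have : z0 + Matrix.vecMul s U = v + Matrix.vecMul ((fun _ => r) + s) U := by
        rw [hz0, Matrix.add_vecMul, add_assoc]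
      rw [this]
      refine aux_box A hAconv v hvA U hUA _ (fun i => ?_) ?_
      · have := (abs_le.1 (hsi i)).1
        simp only [Pi.add_apply]; linarith
      · calc ∑ i, ((fun _ => r : Fin n → ℝ) + s) i ≤ ∑ i : Fin n, 2 * r := by
              refine Finset.sum_le_sum fun i _ => ?_
              have := (abs_le.1 (hsi i)).2
              simp only [Pi.add_apply]; linarith
          _ = 1 := by simpa using hrn
    set p0 := grad φ z0 with hp0
    have hpsi : ∀ s : Fin n → ℝ, ‖s‖ ≤ r →
        φ (z0 + Matrix.vecMul s U) - φ z0 - dotp p0 (Matrix.vecMul s U) ≤ M := by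
      intro s hs
      have h1 := hbox s hs
      have h2 := hbox (-s) (by rwa [norm_neg])
      rw [Matrix.neg_vecMul] at h2
      set k := Matrix.vecMul s U
      have h1' : wfun N t φ (z0 + k) ≤ m + 1 := h1
      have h2' : wfun N t φ (z0 + -k) ≤ m + 1 := h2
      have h3 := hmin z0
      have h4 := aux_grad_ineq φ hd hφc z0 (z0 + k)
      have h5 := aux_grad_ineq φ hd hφc z0 (z0 + -k)
      have h6 := (aux_phi0_convex N R hR).2 (Set.mem_univ (z0 + k)) (Set.mem_univ (z0 + -k))
        (show (0:ℝ) ≤ 1/2 by norm_num) (show (0:ℝ) ≤ 1/2 by norm_num) (by norm_num)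
      have h7 : (1/2 : ℝ) • (z0 + k) + (1/2 : ℝ) • (z0 + -k) = z0 := by
        ext i; simp; ring
      rw [h7] at h6
      simp only [smul_eq_mul] at h6
      rw [add_sub_cancel_left] at h4 h5
      have h8 : dotp (grad φ z0) (-k) = - dotp (grad φ z0) k := by simp [dotp]
      rw [h8] at h5
      rw [← hp0] at h4 h5
      unfold wfun at h1' h2' h3
      have h9 := mul_le_mul_of_nonneg_left h6 (sub_nonneg.2 ht1)
      have h10 := mul_le_mul_of_nonneg_left h5 ht0.le
      have h11 : t * (φ (z0 + k) - φ z0 - dotp p0 k) ≤ 2 := by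
        have hm3 : m ≤ t * φ z0 + (1 - t) * phi0 N z0 := hmin z0
        linarith
      rw [hM, le_div_iff₀ hε]
      have h12 : 0 ≤ φ (z0 + k) - φ z0 - dotp p0 k := by linarith
      nlinarith
    set H : Set (Fin n → ℝ) := W ⁻¹' Metric.closedBall (W z0) (r / 2) with hH
    have hHm : MeasurableSet H :=
      (LinearMap.continuous_of_finiteDimensional W).measurable measurableSet_closedBall
    have hHx : ∀ x ∈ H, ∃ s : Fin n → ℝ, ‖s‖ ≤ r / 2 ∧ x = z0 + Matrix.vecMul s U := by
      intro x hx
      refine ⟨W (x - z0), ?_, by rw [hWU]; abel⟩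
      have : dist (W x) (W z0) ≤ r / 2 := hx
      rwa [dist_eq_norm, ← map_sub] at this
    have hHvol : volume H = ENNReal.ofReal |U.det| * ENNReal.ofReal ((2 * (r / 2)) ^ n) := by
      rw [hH, Measure.addHaar_preimage_linearMap volume hWdet0, hD,
        Real.volume_pi_closedBall _ (by positivity)]
      simp
    set T : Set (Fin n → ℝ) := Matrix.toLin' U ⁻¹'
      Metric.closedBall (Matrix.toLin' U p0) (2 * M / r) with hT
    have hTvol : volume T = ENNReal.ofReal |U.det|⁻¹ *
        ENNReal.ofReal ((2 * (2 * M / r)) ^ n) := by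
      rw [hT, Measure.addHaar_preimage_linearMap volume (by rwa [LinearMap.det_toLin']),
        Real.volume_pi_closedBall _ (by positivity), LinearMap.det_toLin', abs_inv]
      simp
    have himg : grad φ '' H ⊆ T := by
      rintro _ ⟨x, hx, rfl⟩
      obtain ⟨s, hs, rfl⟩ := hHx x hx
      set x := z0 + Matrix.vecMul s U with hxdef
      change dist _ _ ≤ _
      rw [dist_eq_norm, ← map_sub, pi_norm_le_iff_of_nonneg (by positivity)]
      intro i
      have hq : ∀ e : ℝ, |e| ≤ r / 2 → e * dotp (grad φ x - p0) (U i) ≤ M := by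
        intro e he
        have hn1 : ‖s + Pi.single i e‖ ≤ r := by
          refine (norm_add_le _ _).trans ?_
          rw [Pi.norm_single, Real.norm_eq_abs]
          linarith
        have h1 := hpsi _ hn1
        have h2 : Matrix.vecMul (s + Pi.single i e) U = Matrix.vecMul s U + e • U i := by
          rw [Matrix.add_vecMul, Matrix.single_vecMul]
          rfl
        rw [h2, ← add_assoc, ← hxdef] at h1
        have h3 := aux_grad_ineq φ hd hφc x (x + e • U i)
        have h4 := aux_grad_ineq φ hd hφc z0 x
        rw [add_sub_cancel_left] at h3
        have h5 : x - z0 = Matrix.vecMul s U := by rw [hxdef, add_sub_cancel_left]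
        rw [h5, ← hp0] at h4
        have h6 : ∀ a : Fin n → ℝ, dotp a (e • U i) = e * dotp a (U i) := by
          intro a
          simp only [dotp, Finset.mul_sum, Pi.smul_apply, smul_eq_mul]
          exact Finset.sum_congr rfl fun _ _ => by ring
        have h7 : dotp p0 (Matrix.vecMul s U + e • U i)
            = dotp p0 (Matrix.vecMul s U) + e * dotp p0 (U i) := by
          rw [← h6]
          simp [dotp, mul_add, Finset.sum_add_distrib]
        have h8 : dotp (grad φ x - p0) (U i) = dotp (grad φ x) (U i) - dotp p0 (U i) := by
          simp [dotp, sub_mul, Finset.sum_sub_distrib]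
        rw [h6] at h3
        rw [h7] at h1
        rw [h8, mul_sub]
        linarith
      have h1 := hq (r/2) (by rw [abs_of_pos (by positivity)])
      have h2 := hq (-(r/2)) (by rw [abs_neg, abs_of_pos (by positivity)])
      have h3 : Matrix.toLin' U (grad φ x - p0) i = dotp (grad φ x - p0) (U i) := by
        rw [aux_dotp_comm]; rfl
      rw [h3, Real.norm_eq_abs, le_div_iff₀ hr0]
      rcases abs_cases (dotp (grad φ x - p0) (U i)) with ⟨h, -⟩ | ⟨h, -⟩ <;> rw [h] <;> linarith
    calc _ = ∫⁻ x in H, ENNReal.ofReal (Real.exp (-c₀ - K - m - 1)) := by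
          rw [setLIntegral_const, hHvol]
      _ ≤ ∫⁻ x in H, ENNReal.ofReal ((hess φ x).det) := by
          refine setLIntegral_mono' hHm fun x hx => ?_
          refine ENNReal.ofReal_le_ofReal ?_
          rw [heq, Real.exp_le_exp]
          obtain ⟨s, hs, rfl⟩ := hHx x hx
          have h1 : wfun N t φ (z0 + Matrix.vecMul s U) ≤ m + 1 := hbox s (by linarith)
          have h2 := (abs_le.1 (hcK (z0 + Matrix.vecMul s U))).2
          linarith
      _ = volume (grad φ '' H) := (hvol H hHm).symm
      _ ≤ volume T := measure_mono himg
      _ = _ := hTvol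
  · have hWm : Measurable W := (LinearMap.continuous_of_finiteDimensional W).measurable
    calc volume (interior (Pset N)) = volume (grad φ '' Set.univ) := by rw [hb.image_eq]
      _ = ∫⁻ x in Set.univ, ENNReal.ofReal ((hess φ x).det) := hvol _ MeasurableSet.univ
      _ ≤ ∫⁻ x, ENNReal.ofReal (Real.exp (-c₀ + K - m + 2)) *
            ENNReal.ofReal (Real.exp (-(‖W x - W x0‖ / 2))) := by
          rw [Measure.restrict_univ]
          refine lintegral_mono fun x => ?_
          rw [← ENNReal.ofReal_mul (Real.exp_pos _).le, ← Real.exp_add, heq, ← map_sub]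
          refine ENNReal.ofReal_le_ofReal (Real.exp_le_exp.2 ?_)
          have h1 := hgrow x
          have h2 := (abs_le.1 (hcK x)).1
          linarith
      _ = ENNReal.ofReal (Real.exp (-c₀ + K - m + 2)) *
            ∫⁻ x, ENNReal.ofReal (Real.exp (-(‖W x - W x0‖ / 2))) :=
          lintegral_const_mul' _ _ ENNReal.ofReal_ne_top
      _ = _ := by
          congr 1
          have h1 := lintegral_map (μ := volume) (f := fun y : Fin n → ℝ =>
            ENNReal.ofReal (Real.exp (-(‖y - W x0‖ / 2)))) (by fun_prop) hWm
          rw [← h1, Measure.map_linearMap_addHaar_eq_smul_addHaar volume hWdet0, hD,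
            lintegral_smul_measure, smul_eq_mul]
          congr 1
          exact lintegral_sub_right_eq_self
            (fun y : Fin n → ℝ => ENNReal.ofReal (Real.exp (-(‖y‖ / 2)))) (W x0)

theorem inf_w_bounded {n d : ℕ} (hn : 1 ≤ n) (N : Fin d → Fin n → ℤ)
    (hQ : (0 : Fin n → ℝ) ∈ interior (convexHull ℝ (Set.range fun i => fun j => (N i j : ℝ))))
    (c : Fin n → ℝ) (c₀ : ℝ) (ε₀ : ℝ) (hε₀ : ε₀ ∈ Set.Ioc (0 : ℝ) 1) :
    ∃ C > 0, ∀ t ∈ Set.Icc ε₀ 1, ∀ φ : (Fin n → ℝ) → ℝ, IsSolution N c c₀ t φ →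
      |sInf (Set.range (wfun N t φ))| ≤ C := by
  obtain ⟨R, hR0, hR⟩ := aux_P_bdd N hQ
  obtain ⟨hε, hε1⟩ := hε₀
  have hn0 : (0:ℝ) < n := by exact_mod_cast hn
  have hVtop : volume (interior (Pset N)) ≠ ⊤ := by
    refine ((measure_mono (t := Metric.closedBall 0 R) ?_).trans_lt
      measure_closedBall_lt_top).ne
    intro y hy
    rw [mem_closedBall_zero_iff, pi_norm_le_iff_of_nonneg hR0.le]
    exact hR y (interior_subset hy)
  have hVpos : volume (interior (Pset N)) ≠ 0 :=
    (isOpen_interior.measure_pos volume ⟨0, aux_zero_mem N⟩).ne'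
  set V : ℝ := (volume (interior (Pset N))).toReal with hV
  have hV0 : 0 < V := ENNReal.toReal_pos hVpos hVtop
  have hVe : volume (interior (Pset N)) = ENNReal.ofReal V := (ENNReal.ofReal_toReal hVtop).symm
  set I : ℝ := (∫⁻ y : Fin n → ℝ, ENNReal.ofReal (Real.exp (-(‖y‖ / 2)))).toReal with hI
  have hIe : (∫⁻ y : Fin n → ℝ, ENNReal.ofReal (Real.exp (-(‖y‖ / 2)))) = ENNReal.ofReal I :=
    (ENNReal.ofReal_toReal (aux_exp_int n).ne).symm
  have hI0 : 0 ≤ I := ENNReal.toReal_nonneg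
  set K : ℝ := n * R * ‖c‖ with hK
  set a : ℝ := (2 * (1 / (2 * n) / 2)) ^ n with ha
  set b : ℝ := (2 * (2 * (2 / ε₀) / (1 / (2 * n)))) ^ n with hb
  have ha0 : 0 < a := by positivity
  have hb0 : 0 < b := by positivity
  set C1 : ℝ := -c₀ - K - n * R - Real.log V
  set G : ℝ := Real.exp (2 * (-c₀ + K + 2)) * I ^ 2 * b / (V ^ 2 * a * Real.exp (-c₀ - K - 1))
    with hG
  refine ⟨|C1| + |Real.log G| + 1, by positivity, ?_⟩
  rintro t ⟨htε, ht1⟩ φ hφ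
  have ht0 : 0 < t := hε.trans_le htε
  obtain ⟨x0, hx0⟩ := aux_exists_min N R hR0 hR t ht0 ht1 φ hφ.2.1.convexOn
    (hφ.1.differentiable (by simp)) hφ.2.2.1
  have hInf : sInf (Set.range (wfun N t φ)) = wfun N t φ x0 :=
    IsLeast.csInf_eq ⟨⟨x0, rfl⟩, by rintro _ ⟨x, rfl⟩; exact hx0 x⟩
  have hlow := aux_lower N R hR0 hR c c₀ t ht0 ht1 φ hφ x0
  obtain ⟨D, hD, h1, h2⟩ := aux_upper hn N R hR0 hR c c₀ t ε₀ hε htε ht1 φ hφ x0 hx0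
  rw [hInf]
  set m := wfun N t φ x0
  rw [← hK] at h1 h2 hlow
  rw [← ha, ← hb, ← ENNReal.ofReal_mul hD.le, ← ENNReal.ofReal_mul (Real.exp_pos _).le,
    ← ENNReal.ofReal_mul (by positivity), ENNReal.ofReal_le_ofReal_iff (by positivity)] at h1
  rw [hIe, hVe, ← ENNReal.ofReal_mul hD.le, ← ENNReal.ofReal_mul (Real.exp_pos _).le,
    ENNReal.ofReal_le_ofReal_iff (by positivity)] at h2
  rw [hVe, ENNReal.ofReal_le_ofReal_iff hV0.le] at hlow
  -- lower bound
  have hl : C1 ≤ m := by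
    have h2n : (1:ℝ) ≤ 2 ^ n := one_le_pow₀ (by norm_num)
    have h3 : Real.exp (-c₀ - K - n * R - m) ≤ V :=
      le_trans (le_mul_of_one_le_right (Real.exp_pos _).le h2n) hlow
    have h4 := (Real.le_log_iff_exp_le hV0).2 h3
    simp only [C1]
    linarith
  have hu : m ≤ Real.log G := by
    have e1 : Real.exp (-c₀ - K - m - 1) = Real.exp (-c₀ - K - 1) / Real.exp m := by
      rw [← Real.exp_sub]; congr 1; ring
    have e2 : Real.exp (-c₀ + K - m + 2) = Real.exp (-c₀ + K + 2) / Real.exp m := by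
      rw [← Real.exp_sub]; congr 1; ring
    have e3 : Real.exp (2 * (-c₀ + K + 2)) = Real.exp (-c₀ + K + 2) ^ 2 := by
      rw [← Real.exp_nat_mul]; norm_num
    rw [e1] at h1
    rw [e2] at h2
    have hE := Real.exp_pos m
    have hX := Real.exp_pos (-c₀ - K - 1)
    have hY := Real.exp_pos (-c₀ + K + 2)
    rw [e3] at hG
    have hIpos : 0 < I := by
      rcases hI0.eq_or_lt with h | h
      · rw [← h] at h2; simp at h2; linarith
      · exact h
    have hG0 : 0 < G := by rw [hG]; positivity
    rw [Real.le_log_iff_exp_le hG0, hG, le_div_iff₀ (by positivity)]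
    generalize Real.exp m = E at *
    generalize Real.exp (-c₀ - K - 1) = X at *
    generalize Real.exp (-c₀ + K + 2) = Y at *
    have h1' : X * D ^ 2 * a ≤ b * E := by
      have : X / E * (D * a) = (X * D * a) / E := by ring
      rw [this, div_le_iff₀ hE, inv_mul_eq_div, div_mul_eq_mul_div, le_div_iff₀ hD] at h1
      linarith
    have h2' : V * E ≤ Y * (D * I) := by
      have : Y / E * (D * I) = (Y * (D * I)) / E := by ring
      rwa [this, le_div_iff₀ hE] at h2
    have h3 : (V * E) ^ 2 ≤ (Y * (D * I)) ^ 2 := pow_le_pow_left₀ (by positivity) h2' 2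
    have h4 : (V * E) ^ 2 * (a * X) ≤ (Y * (D * I)) ^ 2 * (a * X) :=
      mul_le_mul_of_nonneg_right h3 (by positivity)
    have h5 : (Y * I) ^ 2 * (X * D ^ 2 * a) ≤ (Y * I) ^ 2 * (b * E) :=
      mul_le_mul_of_nonneg_left h1' (by positivity)
    have h6 : E * (E * (V ^ 2 * a * X)) ≤ E * (Y ^ 2 * I ^ 2 * b) := by nlinarith
    exact le_of_mul_le_mul_left h6 hE
  rw [abs_le]
  constructor
  · have := neg_abs_le C1
    have := abs_nonneg (Real.log G)
    linarith
  · have := le_abs_self (Real.log G)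
    have := abs_nonneg C1
    linarith
end
end
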